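/- Assume additionally that 1/2 < α < 1 and set H = 1/(2α). Then for every t > 0 and every ρ > 0, with T_δ⁻ := t^{1-ρ} δ^{-2H(1-ρ)}, one has lim_{δ→0+} E|y_δ(T_δ⁻)|² = 0. -/

import Mathlib

open MeasureTheory ProbabilityTheory Filter Set
open scoped RealInnerProductSpace

/-- The covariance matrix entries `R_{ij}(x) = ∫_{ℝᵈ} cos(k·x) R̂_{ij}(k) dk`, where
`R̂_{ij}(k) = a(|k|)|k|^{-(2α+d-2)} (δ_{ij} - k_i k_j/|k|²)`. -/
noncomputable def covEntry (d : ℕ) (α : ℝ) (a : ℝ → ℝ)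
    (x : EuclideanSpace ℝ (Fin d)) (i j : Fin d) : ℝ :=
  ∫ k : EuclideanSpace ℝ (Fin d),
    Real.cos ⟪k, x⟫ *
      (a ‖k‖ * ‖k‖ ^ (-(2 * α + (d : ℝ) - 2)) *
        ((if i = j then (1:ℝ) else 0) - k i * k j / ‖k‖ ^ 2))

/-!
Write `y t = X t - t • v`, so that `y' = δ • F (t • v + y)`. While `y` is small, the increments of
`y` over `[s, s + h]` are those of the ray integral `∫ F (x + r • v) dr` frozen at `x = y s`. Along
the ray the spectral density `|k| ^ (-(2α + d - 2))` makes the `p`-th moments of this Gaussian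
integral of order `h ^ (β * p)` for each `β` slightly larger than `α`: the Fourier symbol of the
integral is at most `min (h, 2 / |⟪k, v⟫|)`, and `|⟪k, v⟫| ^ (2β - 2)` is integrable against the
density exactly because `α < β`. The same holds for spatial increments, since `F` has bounded
frequencies. Sobolev embedding then makes the ray integrals Hölder in `x` with exponent `η` close to
`1`, with norm of order `h ^ γ`, `γ < α`, for all dyadic intervals of length `h` simultaneously.

As `γ (1 + η) > 1`, which is where `1 / 2 < α` enters, the errors of freezing `x` on dyadic
intervals are summable under refinement (a sewing argument), and `‖y T‖ ≲ δ T ^ γ` up to arbitrarily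
small powers of `T`. This vanishes for `T ≤ δ ^ (-σ)` with `σ α < 1`. The random constants are
controlled by high moments: outside an event of superpolynomially small influence they are at most a
small power of `T`, and on that event a crude polynomial bound on `y` suffices.
-/

/-! ### Integrability of anisotropic power weights -/

section AnisotropicWeight

theorem integrableOn_Icc_abs_rpow_neg {c : ℝ} (hc : c < 1) (K : ℝ) :
    IntegrableOn (fun z : ℝ ↦ |z| ^ (-c)) (Icc (-K) K) := by
  rcases lt_or_ge K 0 with hK | hK
  · simp [Icc_eq_empty (by linarith : ¬-K ≤ K)]
  rw [← intervalIntegrable_iff_integrableOn_Icc_of_le (by linarith)]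
  refine intervalIntegrable_of_even (fun x ↦ by rw [abs_neg]) (fun x hx ↦ ?_)
  refine (intervalIntegral.intervalIntegrable_rpow' (r := -c) (by linarith)).congr fun z hz ↦ ?_
  rw [uIoc_of_le hx.le] at hz
  rw [abs_of_pos hz.1]

variable {d : ℕ}

theorem norm_rpow_mul_abs_rpow_le_prod {a b c : ℝ} (hac : a ≤ c) (hc : 0 ≤ c)
    (habc : a + b = d * c) (i₀ : Fin d) {z : EuclideanSpace ℝ (Fin d)} (hz : ∀ i, z i ≠ 0) :
    ‖z‖ ^ (-b) * |z i₀| ^ (-a) ≤ ∏ i, |z i| ^ (-c) := by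
  have abs_le_norm (i) : |z i| ≤ ‖z‖ := by simpa using PiLp.norm_apply_le z i
  have abs_pos (i) : 0 < |z i| := abs_pos.2 (hz i)
  have norm_pos : 0 < ‖z‖ := (abs_pos i₀).trans_le (abs_le_norm i₀)
  have others : (‖z‖ ^ (-c)) ^ (d - 1) ≤ ∏ i ∈ Finset.univ.erase i₀, |z i| ^ (-c) := by
    have card : (Finset.univ.erase i₀).card = d - 1 := by simp
    rw [← card, ← Finset.prod_const]
    exact Finset.prod_le_prod (fun i _ ↦ by positivity) fun i _ ↦
      Real.rpow_le_rpow_of_nonpos (abs_pos i) (abs_le_norm i) (by linarith)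
  have distinguished : ‖z‖ ^ (-(c - a)) ≤ |z i₀| ^ (-(c - a)) :=
    Real.rpow_le_rpow_of_nonpos (abs_pos i₀) (abs_le_norm i₀) (by linarith)
  calc ‖z‖ ^ (-b) * |z i₀| ^ (-a)
      = ‖z‖ ^ (-(c - a)) * |z i₀| ^ (-a) * (‖z‖ ^ (-c)) ^ (d - 1) := by
        rw [← Real.rpow_natCast (‖z‖ ^ (-c)), ← Real.rpow_mul norm_pos.le, mul_right_comm,
          ← Real.rpow_add norm_pos, Nat.cast_sub i₀.pos]
        congr 2
        push_cast
        linarith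
    _ ≤ |z i₀| ^ (-(c - a)) * |z i₀| ^ (-a) * ∏ i ∈ Finset.univ.erase i₀, |z i| ^ (-c) := by
        gcongr
    _ = |z i₀| ^ (-c) * ∏ i ∈ Finset.univ.erase i₀, |z i| ^ (-c) := by
        rw [← Real.rpow_add (abs_pos i₀)]
        congr 2
        ring
    _ = ∏ i, |z i| ^ (-c) := Finset.mul_prod_erase _ (fun i ↦ |z i| ^ (-c)) (Finset.mem_univ i₀)

theorem integrableOn_cube_prod_abs_rpow_neg {c : ℝ} (hc : c < 1) (K : ℝ) :
    IntegrableOn (fun z : Fin d → ℝ ↦ ∏ i, |z i| ^ (-c)) (Set.univ.pi fun _ ↦ Icc (-K) K) := by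
  rw [IntegrableOn, volume_pi, Measure.restrict_pi_pi]
  exact Integrable.fintype_prod (f := fun (_ : Fin d) (z : ℝ) ↦ |z| ^ (-c))
    (fun _ ↦ integrableOn_Icc_abs_rpow_neg hc K)

theorem integrableOn_closedBall_norm_rpow_mul_abs_apply_rpow {a b c : ℝ} (hac : a ≤ c)
    (hc : 0 ≤ c) (hc1 : c < 1) (habc : a + b = d * c) (i₀ : Fin d) (K : ℝ) :
    IntegrableOn (fun k : EuclideanSpace ℝ (Fin d) ↦ ‖k‖ ^ (-b) * |k i₀| ^ (-a))
      (Metric.closedBall 0 K) := by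
  have ball_subset_cube : WithLp.toLp 2 ⁻¹' Metric.closedBall (0 : EuclideanSpace ℝ (Fin d)) K ⊆
      Set.univ.pi fun _ ↦ Icc (-K) K := fun z hz i _ ↦ by
    have := (PiLp.norm_apply_le (WithLp.toLp 2 z) i).trans (mem_closedBall_zero_iff.1 hz)
    exact abs_le.1 this
  have ne_zero : ∀ᵐ z : Fin d → ℝ, ∀ i, z i ≠ 0 := by
    refine ae_all_iff.2 fun i ↦ ?_
    simpa [volume_pi] using Measure.ae_eval_ne (μ := fun _ : Fin d ↦ (volume : Measure ℝ)) i 0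
  rw [← (PiLp.volume_preserving_toLp (Fin d)).integrableOn_comp_preimage
    (MeasurableEquiv.toLp 2 (Fin d → ℝ)).measurableEmbedding]
  refine ((integrableOn_cube_prod_abs_rpow_neg hc1 K).mono_set ball_subset_cube).mono' ?_ ?_
  · have : Measurable fun k : EuclideanSpace ℝ (Fin d) ↦ ‖k‖ ^ (-b) * |k i₀| ^ (-a) := by fun_prop
    exact (this.comp (PiLp.volume_preserving_toLp (Fin d)).measurable).aestronglyMeasurable
  · filter_upwards [ae_restrict_of_ae ne_zero] with z hz
    rw [Function.comp_apply, Real.norm_of_nonneg (by positivity)]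
    exact norm_rpow_mul_abs_rpow_le_prod hac hc habc i₀ hz

theorem exists_orthonormalBasis_apply_eq (i₀ : Fin d) {v : EuclideanSpace ℝ (Fin d)}
    (hv : ‖v‖ = 1) :
    ∃ B : OrthonormalBasis (Fin d) ℝ (EuclideanSpace ℝ (Fin d)), B i₀ = v := by
  obtain ⟨B, hB⟩ := Orthonormal.exists_orthonormalBasis_extension_of_card_eq (𝕜 := ℝ)
    (E := EuclideanSpace ℝ (Fin d)) (by simp) (v := fun _ : Fin d ↦ v) (s := {i₀})
    ⟨fun _ ↦ hv, fun i j hij ↦ absurd (Subsingleton.elim i j) hij⟩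
  exact ⟨B, hB i₀ rfl⟩

theorem integrableOn_closedBall_norm_rpow_mul_abs_inner_rpow {a b c : ℝ} (hac : a ≤ c)
    (hc : 0 ≤ c) (hc1 : c < 1) (habc : a + b = d * c) {v : EuclideanSpace ℝ (Fin d)}
    (hv : ‖v‖ = 1) (K : ℝ) :
    IntegrableOn (fun k : EuclideanSpace ℝ (Fin d) ↦ ‖k‖ ^ (-b) * |⟪k, v⟫| ^ (-a))
      (Metric.closedBall 0 K) := by
  have hd : 0 < d := Nat.pos_of_ne_zero fun h ↦ by subst h; simp [Subsingleton.elim v 0] at hv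
  obtain ⟨B, hB⟩ := exists_orthonormalBasis_apply_eq ⟨0, hd⟩ hv
  have h := (B.measurePreserving_repr.integrableOn_comp_preimage
    B.repr.toHomeomorph.measurableEmbedding).2
    (integrableOn_closedBall_norm_rpow_mul_abs_apply_rpow hac hc hc1 habc ⟨0, hd⟩ K)
  have ball : B.repr ⁻¹' Metric.closedBall 0 K = Metric.closedBall 0 K := by
    ext k
    simp
  refine (ball ▸ h).congr_fun (fun k _ ↦ ?_) Metric.isClosed_closedBall.measurableSet
  simp only [Function.comp_apply, LinearIsometryEquiv.norm_map]
  rw [B.repr_apply_apply, hB, real_inner_comm]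

theorem ae_inner_ne_zero {E : Type*} [NormedAddCommGroup E] [InnerProductSpace ℝ E]
    [FiniteDimensional ℝ E] [MeasurableSpace E] [BorelSpace E] {v : E} (hv : v ≠ 0) :
    ∀ᵐ k : E, ⟪k, v⟫ ≠ 0 := by
  have h := Measure.addHaar_submodule (volume : Measure E) (ℝ ∙ v)ᗮ fun h ↦ hv <| by
    have : v ∈ (ℝ ∙ v)ᗮ := h ▸ Submodule.mem_top
    rwa [Submodule.mem_orthogonal_singleton_iff_inner_right, inner_self_eq_zero] at this
  rw [ae_iff]
  convert h using 2
  ext k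
  simp [Submodule.mem_orthogonal_singleton_iff_inner_left]

end AnisotropicWeight

/-! ### Trigonometric polynomials -/

section TrigPoly

/-- The trigonometric polynomial `k ↦ ∑ⱼ wⱼ exp(i k·xⱼ)`; it is the Fourier symbol of the linear
combination `∑ⱼ wⱼ F(xⱼ)` of values of a homogeneous field. -/
noncomputable def trigPoly {E ι : Type*} [NormedAddCommGroup E] [InnerProductSpace ℝ E] [Fintype ι]
    (w : ι → ℝ) (x : ι → E) (k : E) : ℂ :=
  ∑ j, w j * Complex.exp (Complex.I * (⟪k, x j⟫ : ℝ))

variable {E ι : Type*} [NormedAddCommGroup E] [InnerProductSpace ℝ E] [Fintype ι]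

theorem trigPoly_comp_equiv {κ : Type*} [Fintype κ] (e : κ ≃ ι) (w : ι → ℝ) (x : ι → E) (k : E) :
    trigPoly (w ∘ e) (x ∘ e) k = trigPoly w x k :=
  e.sum_comp fun j ↦ (w j : ℂ) * Complex.exp (Complex.I * (⟪k, x j⟫ : ℝ))

theorem sq_norm_trigPoly (w : ι → ℝ) (x : ι → E) (k : E) :
    ‖trigPoly w x k‖ ^ 2 = ∑ j, ∑ l, w j * w l * Real.cos ⟪k, x j - x l⟫ := by
  have re : (trigPoly w x k).re = ∑ j, w j * Real.cos ⟪k, x j⟫ := by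
    simp [trigPoly, mul_comm Complex.I, Complex.exp_ofReal_mul_I_re]
  have im : (trigPoly w x k).im = ∑ j, w j * Real.sin ⟪k, x j⟫ := by
    simp [trigPoly, mul_comm Complex.I, Complex.exp_ofReal_mul_I_im]
  rw [← Complex.normSq_eq_norm_sq, Complex.normSq_apply, re, im, Finset.sum_mul_sum,
    Finset.sum_mul_sum, ← Finset.sum_add_distrib]
  refine Finset.sum_congr rfl fun j _ ↦ ?_
  rw [← Finset.sum_add_distrib]
  refine Finset.sum_congr rfl fun l _ ↦ ?_
  rw [inner_sub_right, Real.cos_sub]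
  ring

theorem sum_mul_integral_cos_eq_integral_sq_norm_trigPoly [MeasurableSpace E] [BorelSpace E]
    {μ : Measure E} {g : E → ℝ} (hg : Integrable g μ) (w : ι → ℝ) (x : ι → E) :
    ∑ j, ∑ l, w j * w l * ∫ k, Real.cos ⟪k, x j - x l⟫ * g k ∂μ =
      ∫ k, ‖trigPoly w x k‖ ^ 2 * g k ∂μ := by
  have integrable (y : E) : Integrable (fun k ↦ Real.cos ⟪k, y⟫ * g k) μ :=
    hg.bdd_mul (c := 1) (by fun_prop) (ae_of_all _ fun k ↦ Real.abs_cos_le_one _)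
  simp_rw [sq_norm_trigPoly, Finset.sum_mul, mul_assoc (_ * _)]
  rw [integral_finsetSum _ fun j _ ↦ integrable_finsetSum _ fun l _ ↦ (integrable _).const_mul _]
  refine Finset.sum_congr rfl fun j _ ↦ ?_
  rw [integral_finsetSum _ fun l _ ↦ (integrable _).const_mul _]
  simp_rw [integral_const_mul]

theorem norm_trigPoly_single_le (x k : E) :
    ‖trigPoly (fun _ : Unit ↦ 1) (fun _ ↦ x) k‖ ≤ 1 := by
  simp [trigPoly, Complex.norm_exp_I_mul_ofReal]

theorem norm_trigPoly_increment_le (x w k : E) :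
    ‖trigPoly ![1, -1] ![x + w, x] k‖ ≤ ‖k‖ * ‖w‖ := by
  have factor : trigPoly ![1, -1] ![x + w, x] k =
      Complex.exp (Complex.I * (⟪k, x⟫ : ℝ)) * (Complex.exp (Complex.I * (⟪k, w⟫ : ℝ)) - 1) := by
    simp [trigPoly, inner_add_right, mul_add, Complex.exp_add]
    ring
  rw [factor, norm_mul, Complex.norm_exp_I_mul_ofReal, one_mul]
  exact Real.norm_exp_I_mul_ofReal_sub_one_le.trans (abs_real_inner_le_norm k w)

end TrigPoly

/-! ### Moments of Gaussian fields -/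

section GaussianMoments

theorem lintegral_enorm_pow_gaussianReal_ne_top (p : ℕ) (μ : ℝ) (s : NNReal) :
    ∫⁻ x, ‖x‖ₑ ^ p ∂gaussianReal μ s ≠ ⊤ := by
  rcases eq_or_ne p 0 with rfl | hp
  · simp
  have h := lintegral_rpow_enorm_lt_top_of_eLpNorm_lt_top (by simpa using hp) (by simp)
    (memLp_id_gaussianReal (μ := μ) (v := s) (p : NNReal)).2
  simpa using h.ne

theorem lintegral_enorm_pow_of_map_eq_gaussianReal {Ω : Type*} [MeasurableSpace Ω]
    {P : Measure Ω} {Z : Ω → ℝ} {s : NNReal} (hZ : Measurable Z) (hmap : P.map Z = gaussianReal 0 s)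
    (p : ℕ) :
    ∫⁻ ω, ‖Z ω‖ₑ ^ p ∂P =
      (∫⁻ x, ‖x‖ₑ ^ p ∂gaussianReal 0 1) * ENNReal.ofReal (Real.sqrt s) ^ p := by
  have scaling : gaussianReal 0 s = (gaussianReal 0 1).map (fun x ↦ Real.sqrt s * x) := by
    rw [gaussianReal_map_const_mul]
    congr 1
    · simp
    · ext
      simp
  rw [← lintegral_map (f := fun z ↦ ‖z‖ₑ ^ p) (by fun_prop) hZ, hmap, scaling,
    lintegral_map (by fun_prop) (by fun_prop)]
  simp_rw [enorm_mul, mul_pow]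
  rw [lintegral_const_mul _ (by fun_prop), mul_comm, Real.enorm_of_nonneg (Real.sqrt_nonneg _)]

variable {d : ℕ}

theorem enorm_pow_le_card_pow_mul_sum {p : ℕ} (hp : p ≠ 0) (z : EuclideanSpace ℝ (Fin d)) :
    ‖z‖ₑ ^ p ≤ (d : ENNReal) ^ (p - 1) * ∑ i, ‖z i‖ₑ ^ p := by
  have enorm_le_sum : ‖z‖ₑ ≤ ∑ i, ‖z i‖ₑ := by
    have h := (EuclideanSpace.basisFun (Fin d) ℝ).sum_repr z
    calc ‖z‖ₑ = ‖∑ i, z i • EuclideanSpace.basisFun (Fin d) ℝ i‖ₑ := by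
          conv_lhs => rw [← h]
          simp
      _ ≤ ∑ i, ‖z i • EuclideanSpace.basisFun (Fin d) ℝ i‖ₑ := enorm_sum_le _ _
      _ = ∑ i, ‖z i‖ₑ := by
          simp_rw [enorm_smul, ← ofReal_norm (EuclideanSpace.basisFun (Fin d) ℝ _),
            OrthonormalBasis.norm_eq_one, ENNReal.ofReal_one, mul_one]
  have one_le : (1 : ℝ) ≤ p := by exact_mod_cast Nat.one_le_iff_ne_zero.2 hp
  have jensen := ENNReal.rpow_sum_le_const_mul_sum_rpow Finset.univ (fun i ↦ ‖z i‖ₑ) one_le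
  rw [Finset.card_univ, Fintype.card_fin, ← Nat.cast_pred (Nat.pos_of_ne_zero hp)] at jensen
  simp only [ENNReal.rpow_natCast] at jensen
  exact (pow_le_pow_left' enorm_le_sum p).trans jensen

/-- `F` is a centered homogeneous Gaussian field on `ℝᵈ` whose covariance matrix at separation `x`
has entries `R x i j`: all finite linear combinations of its values have the prescribed law. -/
def IsHomogeneousGaussianField {Ω : Type*} [MeasurableSpace Ω] (P : Measure Ω)
    (F : Ω → EuclideanSpace ℝ (Fin d) → EuclideanSpace ℝ (Fin d))
    (R : EuclideanSpace ℝ (Fin d) → Fin d → Fin d → ℝ) : Prop :=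
  ∀ (N : ℕ) (x c : Fin N → EuclideanSpace ℝ (Fin d)),
    Measure.map (fun ω => ∑ j : Fin N, ⟪c j, F ω (x j)⟫) P =
      gaussianReal 0 (Real.toNNReal (∑ j : Fin N, ∑ l : Fin N,
        ∑ i : Fin d, ∑ i' : Fin d, c j i * R (x j - x l) i i' * c l i'))

variable {Ω : Type*} [MeasurableSpace Ω] {P : Measure Ω}
  {F : Ω → EuclideanSpace ℝ (Fin d) → EuclideanSpace ℝ (Fin d)}
  {R : EuclideanSpace ℝ (Fin d) → Fin d → Fin d → ℝ}

namespace IsHomogeneousGaussianField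

theorem map_sum_smul_apply (hF : IsHomogeneousGaussianField P F R) {N : ℕ} (w : Fin N → ℝ)
    (x : Fin N → EuclideanSpace ℝ (Fin d)) (i : Fin d) :
    P.map (fun ω ↦ (∑ j, w j • F ω (x j)) i) =
      gaussianReal 0 (∑ j, ∑ l, w j * w l * R (x j - x l) i i).toNNReal := by
  convert hF N x (fun j ↦ w j • EuclideanSpace.single i 1) using 3
  · simp [inner_smul_left, EuclideanSpace.inner_single_left]
  · refine Finset.sum_congr rfl fun j _ ↦ Finset.sum_congr rfl fun l _ ↦ ?_
    simp
    ring

theorem lintegral_enorm_sum_smul_pow_le (hF : IsHomogeneousGaussianField P F R)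
    (hF_meas : ∀ x, Measurable fun ω ↦ F ω x) {p : ℕ} (hp : p ≠ 0) {N : ℕ} (w : Fin N → ℝ)
    (x : Fin N → EuclideanSpace ℝ (Fin d)) {σ : ℝ} (hσ : 0 ≤ σ)
    (variance_le : ∀ i, ∑ j, ∑ l, w j * w l * R (x j - x l) i i ≤ σ ^ 2) :
    ∫⁻ ω, ‖∑ j, w j • F ω (x j)‖ₑ ^ p ∂P ≤
      (d : ENNReal) ^ p * (∫⁻ x, ‖x‖ₑ ^ p ∂gaussianReal 0 1) * ENNReal.ofReal σ ^ p := by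
  have coordinate (i : Fin d) : ∫⁻ ω, ‖(∑ j, w j • F ω (x j)) i‖ₑ ^ p ∂P ≤
      (∫⁻ x, ‖x‖ₑ ^ p ∂gaussianReal 0 1) * ENNReal.ofReal σ ^ p := by
    rw [lintegral_enorm_pow_of_map_eq_gaussianReal (by fun_prop) (hF.map_sum_smul_apply w x i)]
    gcongr
    rw [Real.sqrt_le_left hσ, Real.coe_toNNReal']
    exact max_le (variance_le i) (sq_nonneg σ)
  calc ∫⁻ ω, ‖∑ j, w j • F ω (x j)‖ₑ ^ p ∂P
      ≤ ∫⁻ ω, (d : ENNReal) ^ (p - 1) * ∑ i, ‖(∑ j, w j • F ω (x j)) i‖ₑ ^ p ∂P :=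
        lintegral_mono fun ω ↦ enorm_pow_le_card_pow_mul_sum hp _
    _ = (d : ENNReal) ^ (p - 1) * ∑ i, ∫⁻ ω, ‖(∑ j, w j • F ω (x j)) i‖ₑ ^ p ∂P := by
        rw [lintegral_const_mul _ (by fun_prop), lintegral_finsetSum _ (fun i _ ↦ by fun_prop)]
    _ ≤ (d : ENNReal) ^ (p - 1) *
        ∑ _ : Fin d, (∫⁻ x, ‖x‖ₑ ^ p ∂gaussianReal 0 1) * ENNReal.ofReal σ ^ p := by
        gcongr
        exact coordinate _
    _ = _ := by
        rw [Finset.sum_const, Finset.card_univ, Fintype.card_fin, nsmul_eq_mul, ← mul_assoc,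
          pow_sub_one_mul hp, mul_assoc]

end IsHomogeneousGaussianField

end GaussianMoments

/-! ### The spectral density -/

section SpectralDensity

/-- The diagonal entry `R̂ᵢᵢ(k) = a(|k|)|k|^{-(2α+d-2)} (1 - kᵢ²/|k|²)` of the spectral density. -/
noncomputable def diagSpectralDensity (d : ℕ) (α : ℝ) (a : ℝ → ℝ) (i : Fin d)
    (k : EuclideanSpace ℝ (Fin d)) : ℝ :=
  a ‖k‖ * ‖k‖ ^ (-(2 * α + (d : ℝ) - 2)) * (1 - k i * k i / ‖k‖ ^ 2)

variable {d : ℕ} {α K M : ℝ} {a : ℝ → ℝ}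

theorem covEntry_self (y : EuclideanSpace ℝ (Fin d)) (i : Fin d) :
    covEntry d α a y i i = ∫ k, Real.cos ⟪k, y⟫ * diagSpectralDensity d α a i k := by
  simp [covEntry, diagSpectralDensity]

theorem measurable_diagSpectralDensity (ha_meas : Measurable a) (i : Fin d) :
    Measurable (diagSpectralDensity d α a i) := by
  have : Measurable fun k : EuclideanSpace ℝ (Fin d) ↦ a ‖k‖ := ha_meas.comp measurable_norm
  unfold diagSpectralDensity
  fun_prop

theorem apply_mul_self_div_sq_norm_le_one (k : EuclideanSpace ℝ (Fin d)) (i : Fin d) :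
    k i * k i / ‖k‖ ^ 2 ≤ 1 := by
  have h : |k i| ≤ ‖k‖ := by simpa using PiLp.norm_apply_le k i
  refine div_le_one_of_le₀ ?_ (by positivity)
  rw [← abs_mul_abs_self, sq]
  gcongr

theorem diagSpectralDensity_nonneg (ha_nonneg : ∀ r, 0 ≤ r → 0 ≤ a r) (i : Fin d)
    (k : EuclideanSpace ℝ (Fin d)) : 0 ≤ diagSpectralDensity d α a i k := by
  have := ha_nonneg ‖k‖ (norm_nonneg k)
  have := sub_nonneg.2 (apply_mul_self_div_sq_norm_le_one k i)
  unfold diagSpectralDensity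
  positivity

theorem diagSpectralDensity_le (ha_nonneg : ∀ r, 0 ≤ r → 0 ≤ a r) (ha_le : ∀ r, 0 ≤ r → a r ≤ M)
    (i : Fin d) (k : EuclideanSpace ℝ (Fin d)) :
    diagSpectralDensity d α a i k ≤ M * ‖k‖ ^ (-(2 * α + (d : ℝ) - 2)) := by
  have ha := ha_nonneg ‖k‖ (norm_nonneg k)
  have projection_le_one : 1 - k i * k i / ‖k‖ ^ 2 ≤ 1 :=
    sub_le_self _ (div_nonneg (mul_self_nonneg _) (sq_nonneg _))
  calc diagSpectralDensity d α a i k ≤ a ‖k‖ * ‖k‖ ^ (-(2 * α + (d : ℝ) - 2)) * 1 := by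
        unfold diagSpectralDensity
        gcongr
    _ ≤ M * ‖k‖ ^ (-(2 * α + (d : ℝ) - 2)) := by
        rw [mul_one]
        gcongr
        exact ha_le _ (norm_nonneg k)

theorem diagSpectralDensity_eq_zero (ha_supp : ∀ r, K < r → a r = 0) (i : Fin d)
    {k : EuclideanSpace ℝ (Fin d)} (hk : k ∉ Metric.closedBall 0 K) :
    diagSpectralDensity d α a i k = 0 := by
  simp [diagSpectralDensity, ha_supp ‖k‖ (by simpa using hk)]

theorem integrable_diagSpectralDensity (hα : α < 1) (ha_nonneg : ∀ r, 0 ≤ r → 0 ≤ a r)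
    (ha_le : ∀ r, 0 ≤ r → a r ≤ M) (ha_meas : Measurable a) (ha_supp : ∀ r, K < r → a r = 0)
    (i : Fin d) : Integrable (diagSpectralDensity d α a i) := by
  have locally : LocallyIntegrable (diagSpectralDensity d α a i) :=
    locallyIntegrable_of_norm_le_rpow (C := M) (α := 2 * α + (d : ℝ) - 2)
      (by simpa using i.pos.nat_succ_le)
      (by simp only [finrank_euclideanSpace, Fintype.card_fin]; linarith)
      (ae_of_all _ fun k ↦ by
        rw [Real.norm_of_nonneg (diagSpectralDensity_nonneg ha_nonneg i k)]
        exact diagSpectralDensity_le ha_nonneg ha_le i k)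
      (measurable_diagSpectralDensity ha_meas i).aestronglyMeasurable
  rw [← integrableOn_iff_integrable_of_support_subset (s := Metric.closedBall 0 K)
    (fun k hk ↦ by_contra fun h ↦ hk (diagSpectralDensity_eq_zero ha_supp i h))]
  exact locally.integrableOn_isCompact (isCompact_closedBall 0 K)

theorem integrableOn_closedBall_spectralWeight {β : ℝ} (hα : 1 / 2 ≤ α) (hαβ : α < β)
    (hβ : β ≤ 1) {v : EuclideanSpace ℝ (Fin d)} (hv : ‖v‖ = 1) (K : ℝ) :
    IntegrableOn (fun k : EuclideanSpace ℝ (Fin d) ↦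
      ‖k‖ ^ (-(2 * α + (d : ℝ) - 2)) * |⟪k, v⟫| ^ (-(2 - 2 * β))) (Metric.closedBall 0 K) := by
  have hd : (1 : ℝ) ≤ d := Nat.one_le_cast.2 <| Nat.pos_of_ne_zero fun h ↦ by
    subst h
    simp [Subsingleton.elim v 0] at hv
  have quotient_le : 2 * (β - α) / d ≤ 2 * (β - α) := div_le_self (by linarith) hd
  have quotient_pos : 0 < 2 * (β - α) / d := div_pos (by linarith) (by linarith)
  refine integrableOn_closedBall_norm_rpow_mul_abs_inner_rpow (c := 1 - 2 * (β - α) / d)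
    (by linarith) (by linarith) (by linarith) ?_ hv K
  field_simp
  ring

theorem integral_sq_norm_trigPoly_mul_diagSpectralDensity_le {ι : Type*} [Fintype ι]
    (ha_nonneg : ∀ r, 0 ≤ r → 0 ≤ a r) (ha_le : ∀ r, 0 ≤ r → a r ≤ M)
    (ha_supp : ∀ r, K < r → a r = 0) {v : EuclideanSpace ℝ (Fin d)} (hv : v ≠ 0) {β : ℝ}
    (hint : IntegrableOn (fun k : EuclideanSpace ℝ (Fin d) ↦
      ‖k‖ ^ (-(2 * α + (d : ℝ) - 2)) * |⟪k, v⟫| ^ (-(2 - 2 * β))) (Metric.closedBall 0 K))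
    {w : ι → ℝ} {x : ι → EuclideanSpace ℝ (Fin d)} {L : ℝ}
    (hL : ∀ k, ‖k‖ ≤ K → ⟪k, v⟫ ≠ 0 → ‖trigPoly w x k‖ ≤ L * |⟪k, v⟫| ^ (β - 1)) (i : Fin d) :
    ∫ k, ‖trigPoly w x k‖ ^ 2 * diagSpectralDensity d α a i k ≤
      L ^ 2 * (M * ∫ k in Metric.closedBall (0 : EuclideanSpace ℝ (Fin d)) K,
        ‖k‖ ^ (-(2 * α + (d : ℝ) - 2)) * |⟪k, v⟫| ^ (-(2 - 2 * β))) := by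
  have density_nonneg := diagSpectralDensity_nonneg (α := α) ha_nonneg i
  rw [← setIntegral_eq_integral_of_forall_compl_eq_zero (s := Metric.closedBall 0 K)
    (fun k hk ↦ by rw [diagSpectralDensity_eq_zero ha_supp i hk, mul_zero]),
    ← integral_const_mul, ← integral_const_mul]
  refine integral_mono_of_nonneg (ae_of_all _ fun k ↦ by have := density_nonneg k; positivity)
    ((hint.const_mul _).const_mul _) ?_
  filter_upwards [ae_restrict_of_ae (ae_inner_ne_zero hv),
    ae_restrict_mem Metric.isClosed_closedBall.measurableSet] with k hkv hkK
  have symbol : ‖trigPoly w x k‖ ^ 2 ≤ L ^ 2 * |⟪k, v⟫| ^ (-(2 - 2 * β)) := by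
    calc ‖trigPoly w x k‖ ^ 2 ≤ (L * |⟪k, v⟫| ^ (β - 1)) ^ 2 := by
          gcongr
          exact hL k (mem_closedBall_zero_iff.1 hkK) hkv
      _ = L ^ 2 * |⟪k, v⟫| ^ (-(2 - 2 * β)) := by
          rw [mul_pow, ← Real.rpow_mul_natCast (abs_nonneg _)]
          congr 2
          push_cast
          ring
  calc ‖trigPoly w x k‖ ^ 2 * diagSpectralDensity d α a i k
      ≤ L ^ 2 * |⟪k, v⟫| ^ (-(2 - 2 * β)) * (M * ‖k‖ ^ (-(2 * α + (d : ℝ) - 2))) := by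
        gcongr
        · exact density_nonneg k
        · exact diagSpectralDensity_le ha_nonneg ha_le i k
    _ = L ^ 2 * (M * (‖k‖ ^ (-(2 * α + (d : ℝ) - 2)) * |⟪k, v⟫| ^ (-(2 - 2 * β)))) := by ring

end SpectralDensity

/-! ### Moments controlled by Fourier symbols -/

section SpectralMoments

/-- The `p`-th moment of a finite linear combination of values of `F` is at most `C Lᵖ` whenever its
Fourier symbol is at most `L |k·v|^(β-1)` on the frequencies `|k| ≤ K`. For `β = 1` this is the
usual bound by the supremum of the symbol; smaller `β` allows a singularity on the frequencies
orthogonal to `v`, as produced by integrating along `v`. -/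
def SpectralMomentBound {E : Type*} [NormedAddCommGroup E] [InnerProductSpace ℝ E] (K β : ℝ) (v : E)
    {Ω : Type*} [MeasurableSpace Ω] (P : Measure Ω) (F : Ω → E → E) (p : ℕ) (C : ENNReal) : Prop :=
  ∀ {ι : Type} [Fintype ι] (w : ι → ℝ) (x : ι → E) (L : ℝ), 0 ≤ L →
    (∀ k, ‖k‖ ≤ K → ⟪k, v⟫ ≠ 0 → ‖trigPoly w x k‖ ≤ L * |⟪k, v⟫| ^ (β - 1)) →
    ∫⁻ ω, ‖∑ j, w j • F ω (x j)‖ₑ ^ p ∂P ≤ C * ENNReal.ofReal L ^ p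

theorem exists_spectralMomentBound {d : ℕ} {α K β : ℝ} {a : ℝ → ℝ} (hα : 1 / 2 ≤ α)
    (hαβ : α < β) (hβ : β ≤ 1) (ha_nonneg : ∀ r, 0 ≤ r → 0 ≤ a r)
    (ha_bdd : ∃ M, ∀ r, 0 ≤ r → a r ≤ M) (ha_meas : Measurable a) (ha_supp : ∀ r, K < r → a r = 0)
    {v : EuclideanSpace ℝ (Fin d)} (hv : ‖v‖ = 1) {Ω : Type*} [MeasurableSpace Ω] {P : Measure Ω}
    {F : Ω → EuclideanSpace ℝ (Fin d) → EuclideanSpace ℝ (Fin d)}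
    (hF_meas : ∀ x, Measurable fun ω ↦ F ω x)
    (hF : IsHomogeneousGaussianField P F (covEntry d α a)) {p : ℕ} (hp : p ≠ 0) :
    ∃ C ≠ ⊤, SpectralMomentBound K β v P F p C := by
  obtain ⟨M, hM⟩ := ha_bdd
  have hM0 : 0 ≤ M := (ha_nonneg 0 le_rfl).trans (hM 0 le_rfl)
  have hv0 : v ≠ 0 := norm_ne_zero_iff.1 (hv ▸ one_ne_zero)
  have hint := integrableOn_closedBall_spectralWeight hα hαβ hβ hv K
  set V := M * ∫ k in Metric.closedBall (0 : EuclideanSpace ℝ (Fin d)) K,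
    ‖k‖ ^ (-(2 * α + (d : ℝ) - 2)) * |⟪k, v⟫| ^ (-(2 - 2 * β))
  have hV0 : 0 ≤ V := mul_nonneg hM0 (integral_nonneg fun k ↦ by positivity)
  refine ⟨(d : ENNReal) ^ p * (∫⁻ x, ‖x‖ₑ ^ p ∂gaussianReal 0 1) * ENNReal.ofReal √V ^ p, ?_, ?_⟩
  · have := lintegral_enorm_pow_gaussianReal_ne_top p 0 1
    finiteness
  intro ι _ w x L hL hsymbol
  let e := (Fintype.equivFin ι).symm
  have variance_le (i : Fin d) : ∑ j, ∑ l, (w ∘ e) j * (w ∘ e) l *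
      covEntry d α a ((x ∘ e) j - (x ∘ e) l) i i ≤ (√V * L) ^ 2 := by
    simp_rw [covEntry_self]
    rw [sum_mul_integral_cos_eq_integral_sq_norm_trigPoly
      (integrable_diagSpectralDensity (hαβ.trans_le hβ) ha_nonneg hM ha_meas ha_supp i), mul_pow,
      Real.sq_sqrt hV0, mul_comm V]
    simp_rw [trigPoly_comp_equiv]
    exact integral_sq_norm_trigPoly_mul_diagSpectralDensity_le ha_nonneg hM ha_supp hv0 hint
      hsymbol i
  have h := hF.lintegral_enorm_sum_smul_pow_le hF_meas hp (w ∘ e) (x ∘ e)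
    (mul_nonneg (Real.sqrt_nonneg V) hL) variance_le
  rw [ENNReal.ofReal_mul (Real.sqrt_nonneg _), mul_pow, ← mul_assoc] at h
  convert h using 5 with ω
  exact (e.sum_comp fun j ↦ w j • F ω (x j)).symm

end SpectralMoments

/-! ### Riemann sums -/

section RiemannSum

variable {E : Type*} [NormedAddCommGroup E] [NormedSpace ℝ E] [CompleteSpace E]

theorem norm_smul_sub_integral_le {g : ℝ → E} (hg : Continuous g) {a b ε : ℝ} (hab : a ≤ b)
    (h : ∀ r ∈ Icc a b, ‖g a - g r‖ ≤ ε) :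
    ‖(b - a) • g a - ∫ r in a..b, g r‖ ≤ ε * (b - a) := by
  rw [← intervalIntegral.integral_const, ← intervalIntegral.integral_sub (by simp)
    (hg.intervalIntegrable _ _), ← abs_of_nonneg (sub_nonneg.2 hab)]
  refine intervalIntegral.norm_integral_le_of_norm_le_const fun r hr ↦ h r ?_
  rw [uIoc_of_le hab] at hr
  exact Ioc_subset_Icc_self hr

theorem norm_riemannSum_sub_integral_le {g : ℝ → E} (hg : Continuous g) {s l ε : ℝ} (hl : 0 ≤ l)
    {n : ℕ} (hn : n ≠ 0)
    (h : ∀ r ∈ Icc s (s + l), ∀ r' ∈ Icc s (s + l), |r - r'| ≤ l / n → ‖g r - g r'‖ ≤ ε) :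
    ‖∑ j : Fin n, (l / n) • g (s + j * (l / n)) - ∫ r in s..s + l, g r‖ ≤ ε * l := by
  have hn0 : (n : ℝ) ≠ 0 := by exact_mod_cast hn
  set m := l / n with hm
  have hnm : n * m = l := by rw [hm]; field_simp
  have hm0 : 0 ≤ m := by positivity
  have split : ∫ r in s..s + l, g r =
      ∑ j : Fin n, ∫ r in (s + j * m)..(s + j * m + m), g r := by
    have := intervalIntegral.sum_integral_adjacent_intervals (f := g) (μ := volume)
      (a := fun j : ℕ ↦ s + j * m) (n := n) fun k _ ↦ hg.intervalIntegrable _ _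
    simp only [Nat.cast_zero, zero_mul, add_zero, hnm, Nat.cast_add, Nat.cast_one, add_mul,
      one_mul, ← add_assoc] at this
    rw [← this, Finset.sum_range]
  rw [split, ← Finset.sum_sub_distrib]
  have cell (j : Fin n) :
      ‖m • g (s + j * m) - ∫ r in (s + j * m)..(s + j * m + m), g r‖ ≤ ε * m := by
    have hj : ((j : ℝ) + 1) * m ≤ l := by
      rw [← hnm]
      gcongr
      exact_mod_cast j.2
    have hj0 : 0 ≤ (j : ℝ) * m := by positivity
    have := norm_smul_sub_integral_le hg (a := s + j * m) (b := s + j * m + m) (ε := ε)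
      (by linarith) fun r hr ↦ h _ ⟨by linarith, by linarith⟩ _
        ⟨by linarith [hr.1], by linarith [hr.2]⟩ (abs_le.2 ⟨by linarith [hr.2], by linarith [hr.1]⟩)
    rwa [add_sub_cancel_left] at this
  calc _ ≤ ∑ _j : Fin n, ε * m := norm_sum_le_of_le _ fun j _ ↦ cell j
    _ = ε * l := by simp [← hnm]; ring

theorem tendsto_riemannSum {g : ℝ → E} (hg : Continuous g) (s : ℝ) {l : ℝ} (hl : 0 < l) :
    Tendsto (fun n : ℕ ↦ ∑ j : Fin n, (l / n) • g (s + j * (l / n))) atTop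
      (nhds (∫ r in s..s + l, g r)) := by
  refine Metric.tendsto_atTop'.2 fun ε hε ↦ ?_
  obtain ⟨η, hη, huc⟩ := Metric.uniformContinuousOn_iff.1
    (isCompact_Icc.uniformContinuousOn_of_continuous (s := Icc s (s + l)) hg.continuousOn)
    (ε / (2 * l)) (by positivity)
  obtain ⟨N, hN⟩ := exists_nat_gt (l / η)
  refine ⟨N, fun n hn ↦ ?_⟩
  have hn0 : (0 : ℝ) < n := by exact_mod_cast (Nat.zero_le N).trans_lt hn
  have hmesh : l / n < η := by
    rw [div_lt_comm₀ hn0 hη]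
    exact hN.trans (by exact_mod_cast hn)
  rw [dist_eq_norm]
  calc _ ≤ ε / (2 * l) * l := norm_riemannSum_sub_integral_le hg hl.le (by exact_mod_cast hn0.ne')
        fun r hr r' hr' hrr ↦ by
          rw [← dist_eq_norm]
          exact (huc r hr r' hr' (by rw [Real.dist_eq]; exact hrr.trans_lt hmesh)).le
    _ < ε := by field_simp; linarith

end RiemannSum

/-! ### Integrals along rays -/

section RayIntegral

/-- The integral of a vector field `f` along the ray from `x` in direction `v`, over the time
interval `[s, t]`. -/
noncomputable def rayIntegral {E : Type*} [NormedAddCommGroup E] [NormedSpace ℝ E] (v : E)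
    (f : E → E) (s t : ℝ) (x : E) : E :=
  ∫ r in s..t, f (x + r • v)

variable {E : Type*} [NormedAddCommGroup E] [NormedSpace ℝ E] {v : E} {f : E → E}

theorem continuous_rayIntegral (hf : Continuous f) (s t : ℝ) : Continuous (rayIntegral v f s t) :=
  intervalIntegral.continuous_parametric_intervalIntegral_of_continuous' (by fun_prop) _ _

theorem rayIntegral_add_adjacent (hf : Continuous f) (a b c : ℝ) (x : E) :
    rayIntegral v f a b x + rayIntegral v f b c x = rayIntegral v f a c x := by
  have : Continuous fun r : ℝ ↦ f (x + r • v) := by fun_prop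
  exact intervalIntegral.integral_add_adjacent_intervals (this.intervalIntegrable _ _)
    (this.intervalIntegrable _ _)

theorem measurable_uncurry_rayIntegral [MeasurableSpace E] [BorelSpace E]
    [SecondCountableTopology E] {Ω : Type*} [MeasurableSpace Ω] {F : Ω → E → E}
    (hF : Measurable (Function.uncurry F)) (v : E) (s t : ℝ) :
    Measurable (Function.uncurry fun ω ↦ rayIntegral v (F ω) s t) := by
  have joint : Measurable fun z : (Ω × E) × ℝ ↦ F z.1.1 (z.1.2 + z.2 • v) :=
    hF.comp (by fun_prop : Measurable fun z : (Ω × E) × ℝ ↦ (z.1.1, z.1.2 + z.2 • v))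
  have integral (μ : Measure ℝ) [SFinite μ] :
      Measurable fun z : Ω × E ↦ ∫ r, F z.1 (z.2 + r • v) ∂μ :=
    joint.stronglyMeasurable.integral_prod_right.measurable
  exact (integral _).sub (integral _)

theorem tendsto_sum_prod_smul_sum_smul_rayIntegral [CompleteSpace E] {ι : Type*} [Fintype ι]
    (hf : Continuous f) (w : ι → ℝ) (x : ι → E) (s : ℝ) {l : ℝ} (hl : 0 < l) :
    Tendsto (fun n : ℕ ↦ ∑ q : Fin n × ι, (l / n * w q.2) • f (x q.2 + (s + q.1 * (l / n)) • v))
      atTop (nhds (∑ i, w i • rayIntegral v f s (s + l) (x i))) := by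
  have hc (i : ι) : Continuous fun r : ℝ ↦ w i • f (x i + r • v) := by fun_prop
  have := tendsto_riemannSum (continuous_finsetSum Finset.univ fun i _ ↦ hc i) s hl
  rw [intervalIntegral.integral_finsetSum fun i _ ↦ (hc i).intervalIntegrable _ _] at this
  simpa only [Fintype.sum_prod_type, Finset.smul_sum, mul_smul, rayIntegral,
    intervalIntegral.integral_smul] using this

end RayIntegral

/-! ### Moments of ray integrals -/

section RayMoments

theorem norm_geom_sum_exp_le {φ : ℝ} (hφ0 : φ ≠ 0) (hφ : |φ| ≤ Real.pi) (n : ℕ) :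
    ‖∑ j ∈ Finset.range n, Complex.exp (Complex.I * φ) ^ j‖ ≤ Real.pi / |φ| := by
  have numerator : ‖Complex.exp (Complex.I * φ) ^ n - 1‖ ≤ 2 := by
    refine (norm_sub_le _ _).trans (le_of_eq ?_)
    rw [norm_pow, Complex.norm_exp_I_mul_ofReal]
    norm_num
  have denominator : 2 / Real.pi * |φ| ≤ ‖Complex.exp (Complex.I * φ) - 1‖ := by
    rw [Complex.norm_exp_I_mul_ofReal_sub_one, Real.norm_eq_abs, abs_mul, abs_two,
      Real.abs_sin_eq_sin_abs_of_abs_le_pi (by rw [abs_div, abs_two]; linarith [abs_nonneg φ]),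
      abs_div, abs_two]
    have := Real.mul_le_sin (x := |φ| / 2) (by positivity) (by linarith)
    linarith
  rw [le_div_iff₀ (abs_pos.2 hφ0)]
  have product := (norm_mul _ _).symm.trans_le
    ((geom_sum_mul (Complex.exp (Complex.I * φ)) n).symm ▸ numerator)
  have := (mul_le_mul_of_nonneg_left denominator (norm_nonneg _)).trans product
  have hπ := Real.pi_pos
  field_simp at this
  linarith

theorem le_rpow_mul_rpow_one_sub {β G A B : ℝ} (hβ0 : 0 ≤ β) (hβ1 : β ≤ 1) (hG : 0 ≤ G)
    (hA : G ≤ A) (hB : G ≤ B) : G ≤ A ^ β * B ^ (1 - β) := by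
  have hA0 : 0 ≤ A := hG.trans hA
  calc G = G ^ β * G ^ (1 - β) := by
        rw [← Real.rpow_add_of_nonneg hG hβ0 (by linarith), add_sub_cancel, Real.rpow_one]
    _ ≤ A ^ β * B ^ (1 - β) := by gcongr

theorem norm_mul_geom_sum_exp_le {β l θ : ℝ} (hβ0 : 0 ≤ β) (hβ1 : β ≤ 1) (hl : 0 < l) {n : ℕ}
    (hn : n ≠ 0) (hθ0 : θ ≠ 0) (hθ : l / n * |θ| ≤ Real.pi) :
    ‖(l / n : ℝ) * ∑ j ∈ Finset.range n, Complex.exp (Complex.I * (l / n * θ : ℝ)) ^ j‖ ≤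
      l ^ β * Real.pi ^ (1 - β) * |θ| ^ (β - 1) := by
  have hm0 : 0 < l / n := by positivity
  have hφ : |l / n * θ| = l / n * |θ| := by rw [abs_mul, abs_of_pos hm0]
  rw [norm_mul, Complex.norm_real, Real.norm_of_nonneg hm0.le]
  set G := ∑ j ∈ Finset.range n, Complex.exp (Complex.I * (l / n * θ : ℝ)) ^ j
  have trivial_bound : l / n * ‖G‖ ≤ l := by
    have : ‖G‖ ≤ n := (norm_sum_le _ _).trans <| by
      simp only [norm_pow, Complex.norm_exp_I_mul_ofReal]
      simp
    calc l / n * ‖G‖ ≤ l / n * n := by gcongr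
      _ = l := by field_simp
  have cancellation : l / n * ‖G‖ ≤ Real.pi / |θ| := by
    have := norm_geom_sum_exp_le (mul_ne_zero hm0.ne' hθ0) (hφ.trans_le hθ) n
    calc l / n * ‖G‖ ≤ l / n * (Real.pi / |l / n * θ|) := by gcongr
      _ = Real.pi / |θ| := by rw [hφ]; field_simp
  refine (le_rpow_mul_rpow_one_sub hβ0 hβ1 (by positivity) trivial_bound cancellation).trans_eq ?_
  rw [div_eq_mul_inv, Real.mul_rpow Real.pi_pos.le (by positivity), Real.inv_rpow (abs_nonneg _),
    ← Real.rpow_neg (abs_nonneg _), neg_sub, mul_assoc]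

section Symbol

variable {E ι : Type*} [NormedAddCommGroup E] [InnerProductSpace ℝ E] [Fintype ι]

theorem trigPoly_ray (w : ι → ℝ) (x : ι → E) (v k : E) (s m : ℝ) (n : ℕ) :
    trigPoly (fun q : Fin n × ι ↦ m * w q.2) (fun q ↦ x q.2 + (s + q.1 * m) • v) k =
      Complex.exp (Complex.I * (s * ⟪k, v⟫ : ℝ)) * trigPoly w x k *
        (m * ∑ j ∈ Finset.range n, Complex.exp (Complex.I * (m * ⟪k, v⟫ : ℝ)) ^ j) := by
  have phase (z : ℝ) (j : ℕ) : Complex.exp (Complex.I * (z + (s + j * m) * ⟪k, v⟫ : ℝ)) =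
      Complex.exp (Complex.I * (s * ⟪k, v⟫ : ℝ)) * Complex.exp (Complex.I * z) *
        Complex.exp (Complex.I * (m * ⟪k, v⟫ : ℝ)) ^ j := by
    rw [← Complex.exp_nat_mul, ← Complex.exp_add, ← Complex.exp_add]
    congr 1
    push_cast
    ring
  simp only [trigPoly, Fintype.sum_prod_type, inner_add_right, inner_smul_right, phase,
    Finset.sum_range, Finset.mul_sum, Finset.sum_mul]
  refine Finset.sum_congr rfl fun j _ ↦ Finset.sum_congr rfl fun i _ ↦ ?_
  push_cast
  ring

theorem norm_trigPoly_ray_le {β l : ℝ} (hβ0 : 0 ≤ β) (hβ1 : β ≤ 1) (hl : 0 < l) {n : ℕ}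
    (hn : n ≠ 0) {v k : E} (hkv : ⟪k, v⟫ ≠ 0) (hkn : l / n * |⟪k, v⟫| ≤ Real.pi) (w : ι → ℝ)
    (x : ι → E) (s : ℝ) :
    ‖trigPoly (fun q : Fin n × ι ↦ l / n * w q.2) (fun q ↦ x q.2 + (s + q.1 * (l / n)) • v) k‖ ≤
      ‖trigPoly w x k‖ * (l ^ β * Real.pi ^ (1 - β) * |⟪k, v⟫| ^ (β - 1)) := by
  rw [trigPoly_ray, norm_mul, norm_mul, Complex.norm_exp_I_mul_ofReal, one_mul]
  gcongr
  exact norm_mul_geom_sum_exp_le hβ0 hβ1 hl hn hkv hkn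

end Symbol

namespace SpectralMomentBound

variable {E : Type*} [NormedAddCommGroup E] [InnerProductSpace ℝ E] {K β : ℝ} {v : E} {Ω : Type*}
  [MeasurableSpace Ω] {P : Measure Ω} {F : Ω → E → E} {p : ℕ} {C : ENNReal}

theorem to_one (H : SpectralMomentBound K β v P F p C) (hK : 0 ≤ K) (hβ : β ≤ 1) (hv : ‖v‖ ≤ 1) :
    SpectralMomentBound K 1 v P F p (C * ENNReal.ofReal (K ^ (1 - β)) ^ p) := by
  intro ι _ w x L hL hsymb
  rw [mul_assoc, ← mul_pow, ← ENNReal.ofReal_mul (by positivity)]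
  refine H w x _ (by positivity) fun k hk hkv ↦ (hsymb k hk hkv).trans ?_
  have hθ : |⟪k, v⟫| ≤ K := (abs_real_inner_le_norm k v).trans
    ((mul_le_of_le_one_right (norm_nonneg k) hv).trans hk)
  rw [sub_self, Real.rpow_zero, mul_one, mul_comm (K ^ _), mul_assoc]
  refine le_mul_of_one_le_right hL ?_
  rw [← neg_sub 1 β, Real.rpow_neg (abs_nonneg _), ← div_eq_mul_inv,
    one_le_div (Real.rpow_pos_of_pos (abs_pos.2 hkv) _)]
  exact Real.rpow_le_rpow (abs_nonneg _) hθ (by linarith)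

variable [MeasurableSpace E] [BorelSpace E] [SecondCountableTopology E] [CompleteSpace E]

/- Integration over a ray of length `l` multiplies the symbol by at most `min l (π/|k·v|)`, which is
interpolated to `l^β (π/|k·v|)^(1-β)`. -/
theorem along_ray (H : SpectralMomentBound K β v P F p C) (hβ0 : 0 ≤ β) (hβ1 : β ≤ 1)
    (hv : ‖v‖ ≤ 1) (hF_meas : ∀ x, Measurable fun ω ↦ F ω x) (hF_cont : ∀ᵐ ω ∂P, Continuous (F ω))
    (s : ℝ) {l : ℝ} (hl : 0 < l) :
    SpectralMomentBound K 1 v P (fun ω ↦ rayIntegral v (F ω) s (s + l)) p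
      (C * ENNReal.ofReal (l ^ β * Real.pi ^ (1 - β)) ^ p) := by
  intro ι _ w x L hL hsymb
  set Z : ℕ → Ω → ENNReal := fun n ω ↦
    ‖∑ q : Fin n × ι, (l / n * w q.2) • F ω (x q.2 + (s + q.1 * (l / n)) • v)‖ₑ ^ p
  have limit : ∀ᵐ ω ∂P, ‖∑ i, w i • rayIntegral v (F ω) s (s + l) (x i)‖ₑ ^ p =
      liminf (fun n ↦ Z n ω) atTop := by
    filter_upwards [hF_cont] with ω hω
    exact (((ENNReal.continuous_pow p).tendsto _).comp
      (tendsto_sum_prod_smul_sum_smul_rayIntegral hω w x s hl).enorm).liminf_eq.symm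
  rw [lintegral_congr_ae limit, mul_assoc, ← mul_pow, ← ENNReal.ofReal_mul (by positivity)]
  refine (lintegral_liminf_le fun n ↦ by fun_prop).trans ?_
  refine liminf_le_of_frequently_le' (Eventually.frequently ?_)
  filter_upwards [eventually_ge_atTop (⌈l * K / Real.pi⌉₊ + 1)] with n hn
  have hn0 : n ≠ 0 := by lia
  refine H _ _ _ (by positivity) fun k hk hkv ↦ ?_
  have hkn : l / n * |⟪k, v⟫| ≤ Real.pi := by
    have hθ : |⟪k, v⟫| ≤ K := (abs_real_inner_le_norm k v).trans
      ((mul_le_of_le_one_right (norm_nonneg k) hv).trans hk)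
    have hnK : l * K / Real.pi ≤ n := (Nat.le_ceil _).trans (by exact_mod_cast (by lia))
    rw [div_mul_eq_mul_div, div_le_iff₀ (by positivity), mul_comm Real.pi]
    rw [div_le_iff₀ Real.pi_pos] at hnK
    exact (by gcongr : l * |⟪k, v⟫| ≤ l * K).trans hnK
  have hk1 := hsymb k hk hkv
  rw [sub_self, Real.rpow_zero, mul_one] at hk1
  refine (norm_trigPoly_ray_le hβ0 hβ1 hl hn0 hkv hkn w x s).trans ?_
  rw [mul_comm _ L, mul_assoc L]
  gcongr

end SpectralMomentBound

/-- The random field `f` has values and difference quotients with `p`-th moments bounded by `Λ`,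
uniformly in space. -/
structure HasLipschitzMoments {E G : Type*} [NormedAddCommGroup E] [NormedAddCommGroup G]
    {Ω : Type*} [MeasurableSpace Ω] (P : Measure Ω) (f : Ω → E → G) (p : ℕ) (Λ : ENNReal) :
    Prop where
  lintegral_enorm_pow_le (x : E) : ∫⁻ ω, ‖f ω x‖ₑ ^ p ∂P ≤ Λ
  lintegral_enorm_sub_pow_le (x w : E) :
    ∫⁻ ω, ‖f ω (x + w) - f ω x‖ₑ ^ p ∂P ≤ Λ * ‖w‖ₑ ^ p

theorem SpectralMomentBound.hasLipschitzMoments {E : Type*} [NormedAddCommGroup E]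
    [InnerProductSpace ℝ E] {K : ℝ} (hK : 0 ≤ K) {v : E} {Ω : Type*} [MeasurableSpace Ω]
    {P : Measure Ω} {f : Ω → E → E} {p : ℕ} {C : ENNReal} (H : SpectralMomentBound K 1 v P f p C) :
    HasLipschitzMoments P f p (C * ENNReal.ofReal (1 + K) ^ p) where
  lintegral_enorm_pow_le x := by
    have := H (fun _ : Unit ↦ 1) (fun _ ↦ x) (1 + K) (by positivity) fun k _ _ ↦ by
      rw [sub_self, Real.rpow_zero, mul_one]
      exact (norm_trigPoly_single_le x k).trans (by linarith)
    simpa using this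
  lintegral_enorm_sub_pow_le x w := by
    have := H ![1, -1] ![x + w, x] ((1 + K) * ‖w‖) (by positivity) fun k hk _ ↦ by
      rw [sub_self, Real.rpow_zero, mul_one]
      exact (norm_trigPoly_increment_le x w k).trans (by gcongr; linarith)
    rw [ENNReal.ofReal_mul (by positivity), ofReal_norm, mul_pow, ← mul_assoc] at this
    simpa [Fin.sum_univ_two, ← sub_eq_add_neg] using this

end RayMoments

/-! ### Ball averages and a weighted Sobolev energy -/

section SobolevEnergy

theorem enorm_integral_pow_le_lintegral {X G : Type*} [MeasurableSpace X] [NormedAddCommGroup G]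
    [NormedSpace ℝ G] {μ : Measure X} [IsProbabilityMeasure μ] {g : X → G}
    (hg : AEStronglyMeasurable g μ) {p : ℕ} (hp : p ≠ 0) :
    ‖∫ x, g x ∂μ‖ₑ ^ p ≤ ∫⁻ x, ‖g x‖ₑ ^ p ∂μ := by
  have hp0 : (p : ℝ) ≠ 0 := by exact_mod_cast hp
  have h := eLpNorm'_le_eLpNorm'_of_exponent_le (p := 1) (q := p) one_pos
    (by exact_mod_cast Nat.one_le_iff_ne_zero.2 hp) μ hg
  simp only [eLpNorm', ENNReal.rpow_one, div_one, ENNReal.rpow_natCast] at h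
  calc ‖∫ x, g x ∂μ‖ₑ ^ p ≤ ((∫⁻ x, ‖g x‖ₑ ^ p ∂μ) ^ (1 / (p : ℝ))) ^ p := by
        gcongr
        exact (enorm_integral_le_lintegral_enorm _).trans h
    _ = ∫⁻ x, ‖g x‖ₑ ^ p ∂μ := by
        rw [← ENNReal.rpow_natCast, ← ENNReal.rpow_mul, one_div_mul_cancel hp0, ENNReal.rpow_one]

theorem enorm_integral_sub_integral_pow_le {X G : Type*} [MeasurableSpace X] [NormedAddCommGroup G]
    [NormedSpace ℝ G] [CompleteSpace G] {μ ν : Measure X} [IsProbabilityMeasure μ]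
    [IsProbabilityMeasure ν] {f : X → G} (hμ : Integrable f μ) (hν : Integrable f ν) {p : ℕ}
    (hp : p ≠ 0) :
    ‖∫ x, f x ∂μ - ∫ x, f x ∂ν‖ₑ ^ p ≤ ∫⁻ x, ∫⁻ y, ‖f x - f y‖ₑ ^ p ∂ν ∂μ := by
  have inner (x : X) : f x - ∫ y, f y ∂ν = ∫ y, (f x - f y) ∂ν := by
    simp [integral_sub (integrable_const (f x)) hν]
  have outer : ∫ x, f x ∂μ - ∫ y, f y ∂ν = ∫ x, (f x - ∫ y, f y ∂ν) ∂μ := by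
    simp [integral_sub hμ (integrable_const _)]
  rw [outer]
  refine (enorm_integral_pow_le_lintegral (by fun_prop) hp).trans (lintegral_mono fun x ↦ ?_)
  rw [inner]
  exact enorm_integral_pow_le_lintegral (by fun_prop) hp

theorem setLIntegral_enorm_sub_pow_le {E G : Type*} [NormedAddCommGroup E] [MeasurableSpace E]
    [BorelSpace E] [NormedAddCommGroup G] {f : E → G} {p : ℕ} {μ : Measure E}
    [μ.IsAddLeftInvariant] {s : Set E} (hs : MeasurableSet s) {u : E} {ρ : ℝ} (hρ : ρ ≤ 3)
    (hsu : s ⊆ Metric.closedBall u ρ) :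
    ∫⁻ u' in s, ‖f u - f u'‖ₑ ^ p ∂μ ≤
      ENNReal.ofReal ρ ^ p * ∫⁻ w in Metric.closedBall 0 3, (‖f (u + w) - f u‖ₑ / ‖w‖ₑ) ^ p ∂μ := by
  rw [← lintegral_indicator hs, ← lintegral_add_left_eq_self _ u,
    ← lintegral_const_mul' _ _ (by finiteness),
    ← lintegral_indicator Metric.isClosed_closedBall.measurableSet]
  refine lintegral_mono fun w ↦ ?_
  by_cases hw : u + w ∈ s
  · have hwρ : ‖w‖ ≤ ρ := by simpa using hsu hw
    have hw3 : w ∈ Metric.closedBall (0 : E) 3 := by simpa using hwρ.trans hρ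
    simp only [indicator_of_mem hw, indicator_of_mem hw3]
    rw [← mul_pow, ← enorm_neg, neg_sub]
    gcongr
    rcases eq_or_ne w 0 with rfl | hw0
    · simp
    calc ‖f (u + w) - f u‖ₑ = ‖w‖ₑ * (‖f (u + w) - f u‖ₑ / ‖w‖ₑ) :=
          (ENNReal.mul_div_cancel (by simpa using hw0) (by finiteness)).symm
      _ ≤ ENNReal.ofReal ρ * (‖f (u + w) - f u‖ₑ / ‖w‖ₑ) := by
          gcongr
          rw [← ofReal_norm]
          exact ENNReal.ofReal_le_ofReal hwρ
  · simp [indicator_of_notMem hw]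

variable {E : Type*} [NormedAddCommGroup E] [NormedSpace ℝ E]

/-- An integrable polynomially decaying weight on `E`. -/
noncomputable def decayWeight (u : E) : ENNReal :=
  ENNReal.ofReal ((1 + ‖u‖) ^ (-((Module.finrank ℝ E : ℝ) + 1)))

theorem decayWeight_ne_top (u : E) : decayWeight u ≠ ⊤ := ENNReal.ofReal_ne_top

theorem one_le_mul_decayWeight {R : ℝ} {x u : E} (hx : ‖x‖ ≤ R) (hu : u ∈ Metric.closedBall x 1) :
    1 ≤ ENNReal.ofReal ((2 + R) ^ ((Module.finrank ℝ E : ℝ) + 1)) * decayWeight u := by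
  have hR : 0 ≤ R := (norm_nonneg x).trans hx
  have hle : 1 + ‖u‖ ≤ 2 + R := by
    rw [mem_closedBall_iff_norm] at hu
    linarith [norm_le_norm_add_norm_sub' u x]
  rw [decayWeight, ← ENNReal.ofReal_mul (by positivity), ← ENNReal.ofReal_one]
  apply ENNReal.ofReal_le_ofReal
  rw [Real.rpow_neg (by positivity), ← div_eq_mul_inv, one_le_div (by positivity)]
  gcongr

variable [MeasurableSpace E]

theorem setLIntegral_le_mul_lintegral_decayWeight {μ : Measure E} {R : ℝ} {x : E}
    (hx : ‖x‖ ≤ R) {s : Set E} (hs : MeasurableSet s) (hsx : s ⊆ Metric.closedBall x 1)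
    (g : E → ENNReal) :
    ∫⁻ u in s, g u ∂μ ≤ ENNReal.ofReal ((2 + R) ^ ((Module.finrank ℝ E : ℝ) + 1)) *
      ∫⁻ u, decayWeight u * g u ∂μ := by
  rw [← lintegral_const_mul' _ _ ENNReal.ofReal_ne_top]
  refine (setLIntegral_mono' hs fun u hu ↦ ?_).trans (setLIntegral_le_lintegral s _)
  rw [← mul_assoc]
  exact le_mul_of_one_le_left' (one_le_mul_decayWeight hx (hsx hu))

variable [BorelSpace E]

theorem measurable_decayWeight : Measurable (decayWeight (E := E)) := by
  unfold decayWeight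
  fun_prop

theorem lintegral_decayWeight_ne_top [FiniteDimensional ℝ E] (μ : Measure E)
    [μ.IsAddHaarMeasure] :
    ∫⁻ u, decayWeight u ∂μ ≠ ⊤ :=
  (finite_integral_one_add_norm (by simp)).ne

/-- A weighted fractional Sobolev energy of `f`: the `p`-th powers of the values of `f` and of its
difference quotients over displacements of length at most `3`, integrated against `decayWeight`. -/
noncomputable def sobolevEnergy {G : Type*} [NormedAddCommGroup G] (μ : Measure E) (p : ℕ)
    (f : E → G) : ENNReal :=
  ∫⁻ u, decayWeight u * ‖f u‖ₑ ^ p ∂μ +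
    ∫⁻ u, ∫⁻ w in Metric.closedBall 0 3, decayWeight u * (‖f (u + w) - f u‖ₑ / ‖w‖ₑ) ^ p ∂μ ∂μ

end SobolevEnergy

section BallAverage

variable {E G : Type*} [NormedAddCommGroup E] [NormedSpace ℝ E] [MeasurableSpace E]
  [NormedAddCommGroup G] [NormedSpace ℝ G]

/-- The average of `f` over the closed ball of radius `r` about `x`, as the expectation under the
conditional measure. -/
noncomputable def ballAverage (μ : Measure E) (f : E → G) (x : E) (r : ℝ) : G :=
  ∫ u, f u ∂μ[|Metric.closedBall x r]

variable [FiniteDimensional ℝ E] (μ : Measure E) [μ.IsAddHaarMeasure]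

theorem isProbabilityMeasure_cond_closedBall (x : E) {r : ℝ} (hr : 0 < r) :
    IsProbabilityMeasure μ[|Metric.closedBall x r] :=
  cond_isProbabilityMeasure_of_finite (Metric.measure_closedBall_pos μ x hr).ne'
    measure_closedBall_lt_top.ne

variable [BorelSpace E] {μ}

theorem lintegral_cond_closedBall (x : E) {r : ℝ} (hr : 0 < r) (g : E → ENNReal) :
    ∫⁻ u, g u ∂μ[|Metric.closedBall x r] =
      ENNReal.ofReal (r ^ Module.finrank ℝ E * μ.real (Metric.closedBall 0 1))⁻¹ *
        ∫⁻ u in Metric.closedBall x r, g u ∂μ := by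
  have hpos : 0 < μ.real (Metric.closedBall x r) :=
    ENNReal.toReal_pos (Metric.measure_closedBall_pos μ x hr).ne' measure_closedBall_lt_top.ne
  rw [ProbabilityTheory.cond, lintegral_smul_measure, smul_eq_mul,
    ← Measure.addHaar_real_closedBall' μ x hr.le, ENNReal.ofReal_inv_of_pos hpos,
    ofReal_measureReal measure_closedBall_lt_top.ne]

theorem integrable_cond_closedBall {G : Type*} [NormedAddCommGroup G] {f : E → G}
    (hf : Continuous f) (x : E) {r : ℝ} (hr : 0 < r) :
    Integrable f μ[|Metric.closedBall x r] :=
  (hf.continuousOn.integrableOn_compact (isCompact_closedBall x r)).smul_measure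
    (ENNReal.inv_ne_top.2 (Metric.measure_closedBall_pos μ x hr).ne')

variable {f : E → G} {p : ℕ}

theorem enorm_ballAverage_one_pow_le (hf : Continuous f) (hp : p ≠ 0) {R : ℝ} {x : E}
    (hx : ‖x‖ ≤ R) :
    ‖ballAverage μ f x 1‖ₑ ^ p ≤ ENNReal.ofReal (μ.real (Metric.closedBall (0 : E) 1))⁻¹ *
      (ENNReal.ofReal ((2 + R) ^ ((Module.finrank ℝ E : ℝ) + 1)) * sobolevEnergy μ p f) := by
  have := isProbabilityMeasure_cond_closedBall μ x one_pos
  refine (enorm_integral_pow_le_lintegral hf.aestronglyMeasurable hp).trans ?_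
  rw [lintegral_cond_closedBall x one_pos, one_pow, one_mul]
  gcongr
  refine (setLIntegral_le_mul_lintegral_decayWeight hx
    Metric.isClosed_closedBall.measurableSet subset_rfl _).trans ?_
  gcongr
  exact le_self_add

variable [CompleteSpace G]

theorem tendsto_ballAverage (hf : Continuous f) (x : E) {r : ℕ → ℝ} (hr : ∀ n, 0 < r n)
    (hr0 : Tendsto r atTop (nhds 0)) :
    Tendsto (fun n ↦ ballAverage μ f x (r n)) atTop (nhds (f x)) := by
  refine Metric.tendsto_atTop.2 fun ε hε ↦ ?_
  obtain ⟨η, hη, hfη⟩ := Metric.continuous_iff.1 hf x (ε / 2) (by positivity)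
  obtain ⟨N, hN⟩ := Metric.tendsto_atTop.1 hr0 η hη
  refine ⟨N, fun n hn ↦ ?_⟩
  have := isProbabilityMeasure_cond_closedBall μ x (hr n)
  have hrη : r n < η := (le_abs_self _).trans_lt (by simpa [Real.dist_eq] using hN n hn)
  have hsub : ballAverage μ f x (r n) - f x = ∫ u, (f u - f x) ∂μ[|Metric.closedBall x (r n)] := by
    rw [integral_sub (integrable_cond_closedBall hf x (hr n)) (integrable_const _)]
    simp [ballAverage]
  rw [dist_eq_norm, hsub]
  refine (norm_integral_le_of_norm_le_const (C := ε / 2) ?_).trans_lt (by simp; linarith)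
  filter_upwards [ae_cond_mem Metric.isClosed_closedBall.measurableSet] with u hu
  rw [← dist_eq_norm]
  exact (hfη u (lt_of_le_of_lt hu hrη)).le

theorem enorm_ballAverage_sub_pow_le (hf : Continuous f) (hp : p ≠ 0) {R : ℝ} {x₁ x₂ : E}
    (hx₁ : ‖x₁‖ ≤ R) {r₁ r₂ ρ : ℝ} (hr₁ : 0 < r₁) (hr₂ : 0 < r₂) (hr₁' : r₁ ≤ 1) (hρ : ρ ≤ 3)
    (hdist : r₁ + dist x₁ x₂ + r₂ ≤ ρ) :
    ‖ballAverage μ f x₁ r₁ - ballAverage μ f x₂ r₂‖ₑ ^ p ≤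
      ENNReal.ofReal (r₁ ^ Module.finrank ℝ E * μ.real (Metric.closedBall 0 1))⁻¹ *
        (ENNReal.ofReal (r₂ ^ Module.finrank ℝ E * μ.real (Metric.closedBall 0 1))⁻¹ *
          (ENNReal.ofReal ρ ^ p * (ENNReal.ofReal ((2 + R) ^ ((Module.finrank ℝ E : ℝ) + 1)) *
            sobolevEnergy μ p f))) := by
  have := isProbabilityMeasure_cond_closedBall μ x₁ hr₁
  have := isProbabilityMeasure_cond_closedBall μ x₂ hr₂
  have hmeas {x : E} {r : ℝ} : MeasurableSet (Metric.closedBall x r) :=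
    Metric.isClosed_closedBall.measurableSet
  have hball {u : E} (hu : u ∈ Metric.closedBall x₁ r₁) :
      Metric.closedBall x₂ r₂ ⊆ Metric.closedBall u ρ :=
    Metric.closedBall_subset_closedBall' <| by
      linarith [dist_triangle_left x₂ u x₁, Metric.mem_closedBall'.1 hu]
  refine (enorm_integral_sub_integral_pow_le (integrable_cond_closedBall hf x₁ hr₁)
    (integrable_cond_closedBall hf x₂ hr₂) hp).trans ?_
  simp_rw [lintegral_cond_closedBall _ hr₁, lintegral_cond_closedBall _ hr₂]
  rw [lintegral_const_mul' _ _ ENNReal.ofReal_ne_top]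
  gcongr
  refine (setLIntegral_mono' hmeas fun u hu ↦
    setLIntegral_enorm_sub_pow_le hmeas hρ (hball hu)).trans ?_
  rw [lintegral_const_mul' _ _ (by finiteness)]
  gcongr
  refine (setLIntegral_le_mul_lintegral_decayWeight hx₁ hmeas
    (Metric.closedBall_subset_closedBall hr₁') _).trans ?_
  gcongr
  refine le_add_left (le_of_eq (lintegral_congr fun u ↦ ?_))
  rw [lintegral_const_mul' _ _ (decayWeight_ne_top u)]

end BallAverage

/-! ### Hölder bounds from the Sobolev energy -/

section Campanato

variable {E G : Type*} [NormedAddCommGroup E] [NormedAddCommGroup G]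

/-- `g` is bounded by `N` and `η`-Hölder with constant `N` on the centred ball of radius `R`. -/
structure HolderBoundedOn (g : E → G) (R N η : ℝ) : Prop where
  norm_le : ∀ x, ‖x‖ ≤ R → ‖g x‖ ≤ N
  norm_sub_le : ∀ x y, ‖x‖ ≤ R → ‖y‖ ≤ R → ‖g x - g y‖ ≤ N * ‖x - y‖ ^ η

theorem HolderBoundedOn.mono {g : E → G} {R N M η : ℝ} (h : HolderBoundedOn g R N η) (hNM : N ≤ M) :
    HolderBoundedOn g R M η where
  norm_le x hx := (h.norm_le x hx).trans hNM
  norm_sub_le x y hx hy := (h.norm_sub_le x y hx hy).trans (by gcongr)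

variable [NormedSpace ℝ E] [MeasurableSpace E] [NormedSpace ℝ G]

/-- A Campanato-type control of `f` near the centred ball of radius `R`: unit-scale averages are
bounded by `M`, and averages over overlapping balls of comparable radius `r ≤ 1` differ by at most
`M * r ^ η`. -/
structure CampanatoBound (μ : Measure E) (f : E → G) (R M η : ℝ) : Prop where
  norm_average_le : ∀ x, ‖x‖ ≤ R → ‖ballAverage μ f x 1‖ ≤ M
  norm_average_sub_le : ∀ x y r s, ‖x‖ ≤ R → 0 < s → s ≤ r → r ≤ 2 * s → r ≤ 1 → dist x y ≤ r →
    ‖ballAverage μ f x r - ballAverage μ f y s‖ ≤ M * r ^ η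

namespace CampanatoBound

variable [BorelSpace E] [FiniteDimensional ℝ E] [CompleteSpace G] {μ : Measure E}
  [μ.IsAddHaarMeasure] {f : E → G} {R M η : ℝ}

theorem norm_average_sub_self_le (h : CampanatoBound μ f R M η) (hf : Continuous f) (hη : 0 < η)
    {x : E} (hx : ‖x‖ ≤ R) {r : ℝ} (hr : 0 < r) (hr1 : r ≤ 1) :
    ‖ballAverage μ f x r - f x‖ ≤ M * r ^ η / (1 - (1 / 2) ^ η) := by
  have hlim : Tendsto (fun n : ℕ ↦ ballAverage μ f x (r * (1 / 2) ^ n)) atTop (nhds (f x)) :=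
    tendsto_ballAverage hf x (fun n ↦ by positivity) <| by
      simpa using (tendsto_pow_atTop_nhds_zero_of_lt_one (r := (1 / 2 : ℝ)) (by norm_num)
        (by norm_num)).const_mul r
  have hstep (n : ℕ) : dist (ballAverage μ f x (r * (1 / 2) ^ n))
      (ballAverage μ f x (r * (1 / 2) ^ (n + 1))) ≤ M * r ^ η * ((1 / 2) ^ η) ^ n := by
    have hpos : 0 < r * (1 / 2 : ℝ) ^ n := by positivity
    have hle : r * (1 / 2 : ℝ) ^ n ≤ 1 :=
      mul_le_one₀ hr1 (by positivity) (pow_le_one₀ (by norm_num) (by norm_num))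
    have hrpow : M * r ^ η * ((1 / 2) ^ η) ^ n = M * (r * (1 / 2) ^ n) ^ η := by
      rw [Real.mul_rpow hr.le (by positivity), ← Real.rpow_pow_comm (by norm_num), mul_assoc]
    rw [dist_eq_norm, hrpow]
    refine h.norm_average_sub_le x x _ _ hx (by positivity) ?_ ?_ hle (by simpa using hpos.le)
    all_goals rw [pow_succ]; linarith
  have hratio : (1 / 2 : ℝ) ^ η < 1 := Real.rpow_lt_one (by norm_num) (by norm_num) hη
  simpa [dist_eq_norm] using dist_le_of_le_geometric_of_tendsto₀ _ _ hratio hstep hlim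

theorem norm_le (h : CampanatoBound μ f R M η) (hf : Continuous f) (hη : 0 < η) {x : E}
    (hx : ‖x‖ ≤ R) : ‖f x‖ ≤ M + M / (1 - (1 / 2) ^ η) := by
  have hsub := h.norm_average_sub_self_le hf hη hx one_pos le_rfl
  rw [Real.one_rpow, mul_one] at hsub
  linarith [norm_le_norm_add_norm_sub (ballAverage μ f x 1) (f x), h.norm_average_le x hx]

theorem norm_sub_le_of_norm_sub_le_one (h : CampanatoBound μ f R M η) (hf : Continuous f)
    (hη : 0 < η) {x y : E} (hx : ‖x‖ ≤ R) (hy : ‖y‖ ≤ R) (hxy : 0 < ‖x - y‖)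
    (hxy1 : ‖x - y‖ ≤ 1) :
    ‖f x - f y‖ ≤ (M + 2 * (M / (1 - (1 / 2) ^ η))) * ‖x - y‖ ^ η := by
  set r := ‖x - y‖
  have hX := h.norm_average_sub_self_le hf hη hx hxy hxy1
  have hY := h.norm_average_sub_self_le hf hη hy hxy hxy1
  have hXY := h.norm_average_sub_le x y r r hx hxy le_rfl (by linarith) hxy1
    (by rw [dist_eq_norm])
  calc ‖f x - f y‖
      = ‖(ballAverage μ f x r - ballAverage μ f y r) - (ballAverage μ f x r - f x) +
          (ballAverage μ f y r - f y)‖ := by congr 1; abel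
    _ ≤ M * r ^ η + M * r ^ η / (1 - (1 / 2) ^ η) + M * r ^ η / (1 - (1 / 2) ^ η) :=
        (norm_add_le _ _).trans (add_le_add ((norm_sub_le _ _).trans (add_le_add hXY hX)) hY)
    _ = (M + 2 * (M / (1 - (1 / 2) ^ η))) * r ^ η := by ring

theorem holderBoundedOn (h : CampanatoBound μ f R M η) (hf : Continuous f) (hη : 0 < η)
    (hM : 0 ≤ M) : HolderBoundedOn f R (2 * M + 2 * (M / (1 - (1 / 2) ^ η))) η := by
  have hq : 0 ≤ M / (1 - (1 / 2) ^ η) :=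
    div_nonneg hM (sub_nonneg.2 (Real.rpow_le_one (by norm_num) (by norm_num) hη.le))
  refine ⟨fun x hx ↦ by linarith [h.norm_le hf hη hx], fun x y hx hy ↦ ?_⟩
  rcases (norm_nonneg (x - y)).eq_or_lt with hxy | hxy
  · rw [← hxy, Real.zero_rpow hη.ne', mul_zero, ← sub_eq_zero.1 (norm_eq_zero.1 hxy.symm), sub_self,
      norm_zero]
  rcases le_total ‖x - y‖ 1 with hxy1 | hxy1
  · refine (h.norm_sub_le_of_norm_sub_le_one hf hη hx hy hxy hxy1).trans ?_
    gcongr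
    linarith
  · have hpow : 1 ≤ ‖x - y‖ ^ η := Real.one_le_rpow hxy1 hη.le
    calc ‖f x - f y‖ ≤ 2 * M + 2 * (M / (1 - (1 / 2) ^ η)) := by
          linarith [norm_sub_le (f x) (f y), h.norm_le hf hη hx, h.norm_le hf hη hy]
      _ ≤ (2 * M + 2 * (M / (1 - (1 / 2) ^ η))) * ‖x - y‖ ^ η :=
          le_mul_of_one_le_right (by positivity) hpow

end CampanatoBound

end Campanato

section GarsiaRodemichRumsey

theorem norm_le_of_enorm_pow_le {G : Type*} [NormedAddCommGroup G] {z : G} {p : ℕ} (hp : p ≠ 0)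
    {c : ℝ} (hc : 0 ≤ c) (h : ‖z‖ₑ ^ p ≤ ENNReal.ofReal (c ^ p)) : ‖z‖ ≤ c := by
  rw [← ofReal_norm, ENNReal.ofReal_pow hc] at h
  exact (ENNReal.ofReal_le_ofReal_iff hc).1 ((ENNReal.pow_le_pow_left_iff hp).1 h)

variable {E G : Type*} [NormedAddCommGroup E] [NormedSpace ℝ E] [FiniteDimensional ℝ E]
  [MeasurableSpace E] [BorelSpace E] {μ : Measure E} [μ.IsAddHaarMeasure] [NormedAddCommGroup G]
  [NormedSpace ℝ G] {f : E → G} {p : ℕ} {R m : ℝ}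

theorem norm_ballAverage_one_le (hf : Continuous f) (hp : p ≠ 0) (hm : 0 ≤ m)
    (hE : ENNReal.ofReal ((2 + R) ^ ((Module.finrank ℝ E : ℝ) + 1)) * sobolevEnergy μ p f ≤
      ENNReal.ofReal (m ^ p)) {x : E} (hx : ‖x‖ ≤ R) :
    ‖ballAverage μ f x 1‖ ≤ (μ.real (Metric.closedBall (0 : E) 1))⁻¹ ^ (p : ℝ)⁻¹ * m := by
  refine norm_le_of_enorm_pow_le hp (by positivity)
    ((enorm_ballAverage_one_pow_le hf hp hx).trans ?_)
  rw [mul_pow, Real.rpow_inv_natCast_pow (by positivity) hp, ENNReal.ofReal_mul (by positivity)]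
  gcongr

theorem norm_ballAverage_sub_le [CompleteSpace G] (hf : Continuous f) (hp : p ≠ 0) (hm : 0 ≤ m)
    (hE : ENNReal.ofReal ((2 + R) ^ ((Module.finrank ℝ E : ℝ) + 1)) * sobolevEnergy μ p f ≤
      ENNReal.ofReal (m ^ p)) {x y : E} (hx : ‖x‖ ≤ R) {r s : ℝ} (hs : 0 < s) (hsr : s ≤ r)
    (hrs : r ≤ 2 * s) (hr : r ≤ 1) (hxy : dist x y ≤ r) :
    ‖ballAverage μ f x r - ballAverage μ f y s‖ ≤
      3 * (2 ^ Module.finrank ℝ E / μ.real (Metric.closedBall (0 : E) 1) ^ 2) ^ (p : ℝ)⁻¹ * m *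
        r ^ (1 - 2 * (Module.finrank ℝ E : ℝ) / p) := by
  set d := Module.finrank ℝ E
  set V := μ.real (Metric.closedBall (0 : E) 1)
  have hV : 0 < V := ENNReal.toReal_pos (Metric.measure_closedBall_pos μ 0 one_pos).ne'
    measure_closedBall_lt_top.ne
  have hr0 : 0 < r := hs.trans_le hsr
  have hrpow : (r ^ (1 - 2 * (d : ℝ) / p)) ^ p = r ^ p / r ^ (2 * d) := by
    have : (1 - 2 * (d : ℝ) / p) * p = p - ((2 * d : ℕ) : ℝ) := by
      have : (p : ℝ) ≠ 0 := by exact_mod_cast hp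
      push_cast
      field_simp
    rw [← Real.rpow_mul_natCast hr0.le, this, Real.rpow_sub hr0, Real.rpow_natCast,
      Real.rpow_natCast]
  refine norm_le_of_enorm_pow_le hp (by positivity)
    ((enorm_ballAverage_sub_pow_le hf hp hx hr0 hs hr (ρ := 3 * r) (by linarith)
      (by linarith)).trans ?_)
  calc _ ≤ ENNReal.ofReal (r ^ d * V)⁻¹ * (ENNReal.ofReal (s ^ d * V)⁻¹ *
        (ENNReal.ofReal (3 * r) ^ p * ENNReal.ofReal (m ^ p))) := by gcongr
    _ = ENNReal.ofReal ((r ^ d * V)⁻¹ * ((s ^ d * V)⁻¹ * ((3 * r) ^ p * m ^ p))) := by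
        rw [← ENNReal.ofReal_pow (by positivity), ← ENNReal.ofReal_mul (by positivity),
          ← ENNReal.ofReal_mul (by positivity), ← ENNReal.ofReal_mul (by positivity)]
    _ ≤ ENNReal.ofReal ((r ^ d * V)⁻¹ * (((r / 2) ^ d * V)⁻¹ * ((3 * r) ^ p * m ^ p))) := by
        gcongr
        linarith
    _ = _ := by
        rw [mul_pow _ (r ^ _), mul_pow _ m, mul_pow 3 (_ ^ _), hrpow,
          Real.rpow_inv_natCast_pow (by positivity) hp, mul_pow, div_pow]
        congr 1
        field_simp
        ring

variable (E G μ p) in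
theorem exists_campanatoBound [CompleteSpace G] (hp : p ≠ 0) :
    ∃ C : ℝ, 0 ≤ C ∧ ∀ (f : E → G) (R m : ℝ), Continuous f → 0 ≤ m →
      ENNReal.ofReal ((2 + R) ^ ((Module.finrank ℝ E : ℝ) + 1)) * sobolevEnergy μ p f ≤
        ENNReal.ofReal (m ^ p) →
      CampanatoBound μ f R (C * m) (1 - 2 * (Module.finrank ℝ E : ℝ) / p) := by
  set V := μ.real (Metric.closedBall (0 : E) 1)
  refine ⟨max (V⁻¹ ^ (p : ℝ)⁻¹) (3 * (2 ^ Module.finrank ℝ E / V ^ 2) ^ (p : ℝ)⁻¹),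
    le_max_of_le_left (by positivity), fun f R m hf hm hE ↦ ⟨fun x hx ↦ ?_,
      fun x y r s hx hs hsr hrs hr hxy ↦ ?_⟩⟩
  · refine (norm_ballAverage_one_le hf hp hm hE hx).trans ?_
    gcongr
    exact le_max_left _ _
  · refine (norm_ballAverage_sub_le hf hp hm hE hx hs hsr hrs hr hxy).trans ?_
    have hr0 : 0 ≤ r := (hs.trans_le hsr).le
    gcongr
    exact le_max_right _ _

variable (E G μ p) in
theorem exists_holderBoundedOn_of_sobolevEnergy_le [CompleteSpace G]
    (hp : 2 * Module.finrank ℝ E < p) :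
    ∃ C : ℝ, 1 ≤ C ∧ ∀ (f : E → G) (R S : ℝ), Continuous f → 0 ≤ S →
      sobolevEnergy μ p f ≤ ENNReal.ofReal S →
      HolderBoundedOn f R (C * (2 + R) ^ (((Module.finrank ℝ E : ℝ) + 1) / p) * S ^ (p : ℝ)⁻¹)
        (1 - 2 * (Module.finrank ℝ E : ℝ) / p) := by
  have hp0 : p ≠ 0 := by omega
  have hη : 0 < 1 - 2 * (Module.finrank ℝ E : ℝ) / p := by
    rw [sub_pos, div_lt_one (by positivity)]
    exact_mod_cast hp
  obtain ⟨A, hA, hbound⟩ := exists_campanatoBound E G μ p hp0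
  set η := 1 - 2 * (Module.finrank ℝ E : ℝ) / p
  refine ⟨max 1 (2 * A + 2 * (A / (1 - (1 / 2) ^ η))), le_max_left _ _, fun f R S hf hS hE ↦ ?_⟩
  rcases lt_or_ge R 0 with hR | hR
  · exact ⟨fun x hx ↦ absurd (hx.trans_lt hR) (norm_nonneg x).not_gt,
      fun x _ hx ↦ absurd (hx.trans_lt hR) (norm_nonneg x).not_gt⟩
  set m := (2 + R) ^ (((Module.finrank ℝ E : ℝ) + 1) / p) * S ^ (p : ℝ)⁻¹ with hm
  have hm0 : 0 ≤ m := by positivity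
  have hmpow : m ^ p = (2 + R) ^ ((Module.finrank ℝ E : ℝ) + 1) * S := by
    rw [hm, mul_pow, Real.rpow_inv_natCast_pow hS hp0, ← Real.rpow_mul_natCast (by positivity),
      div_mul_cancel₀ _ (by exact_mod_cast hp0)]
  refine ((hbound f R m hf hm0 ?_).holderBoundedOn hf hη (by positivity)).mono ?_
  · rw [hmpow, ENNReal.ofReal_mul (by positivity)]
    gcongr
  · calc 2 * (A * m) + 2 * (A * m / (1 - (1 / 2) ^ η))
        = (2 * A + 2 * (A / (1 - (1 / 2) ^ η))) * m := by ring
      _ ≤ max 1 (2 * A + 2 * (A / (1 - (1 / 2) ^ η))) * m := by gcongr; exact le_max_right _ _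
      _ = _ := by rw [hm, mul_assoc]

end GarsiaRodemichRumsey

section RandomEnergy

variable {E G Ω : Type*} [NormedAddCommGroup E] [NormedAddCommGroup G] [MeasurableSpace Ω]
  {f : Ω → E → G} {p : ℕ} {P : Measure Ω} {Λ : ENNReal}

theorem HasLipschitzMoments.lintegral_enorm_sub_div_pow_le (h : HasLipschitzMoments P f p Λ)
    (hp : p ≠ 0) (x w : E) : ∫⁻ ω, (‖f ω (x + w) - f ω x‖ₑ / ‖w‖ₑ) ^ p ∂P ≤ Λ := by
  rcases eq_or_ne w 0 with rfl | hw
  · simp [hp]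
  have hw0 : (‖w‖ₑ ^ p)⁻¹ ≠ ⊤ := ENNReal.inv_ne_top.2 (pow_ne_zero p (by simpa using hw))
  simp_rw [div_eq_mul_inv, mul_pow, ← ENNReal.inv_pow]
  rw [lintegral_mul_const' _ _ hw0, ← div_eq_mul_inv]
  exact ENNReal.div_le_of_le_mul (h.lintegral_enorm_sub_pow_le x w)

variable [NormedSpace ℝ E] [MeasurableSpace E] [BorelSpace E] [MeasurableSpace G]
  [BorelSpace G]

theorem measurable_decayWeight_mul_enorm_pow (hf : Measurable (Function.uncurry f)) :
    Measurable fun z : Ω × E ↦ decayWeight z.2 * ‖f z.1 z.2‖ₑ ^ p :=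
  (measurable_decayWeight.comp measurable_snd).mul (hf.enorm.pow_const p)

variable [SecondCountableTopology E] [SecondCountableTopology G]

theorem measurable_decayWeight_mul_enorm_sub_div_pow (hf : Measurable (Function.uncurry f)) :
    Measurable fun z : (Ω × E) × E ↦
      decayWeight z.1.2 * (‖f z.1.1 (z.1.2 + z.2) - f z.1.1 z.1.2‖ₑ / ‖z.2‖ₑ) ^ p := by
  have : Measurable fun z : (Ω × E) × E ↦ f z.1.1 (z.1.2 + z.2) :=
    hf.comp (by fun_prop : Measurable fun z : (Ω × E) × E ↦ (z.1.1, z.1.2 + z.2))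
  have : Measurable fun z : (Ω × E) × E ↦ f z.1.1 z.1.2 := hf.comp measurable_fst
  have : Measurable fun z : (Ω × E) × E ↦ decayWeight z.1.2 :=
    measurable_decayWeight.comp (by fun_prop)
  fun_prop

variable (μ : Measure E) [SFinite μ]

theorem measurable_sobolevEnergy (hf : Measurable (Function.uncurry f)) :
    Measurable fun ω ↦ sobolevEnergy μ p (f ω) :=
  (measurable_decayWeight_mul_enorm_pow hf).lintegral_prod_right.add <|
    (measurable_decayWeight_mul_enorm_sub_div_pow hf).lintegral_prod_right.lintegral_prod_right

theorem HasLipschitzMoments.lintegral_sobolevEnergy_le [SFinite P]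
    (h : HasLipschitzMoments P f p Λ) (hf : Measurable (Function.uncurry f)) (hp : p ≠ 0) :
    ∫⁻ ω, sobolevEnergy μ p (f ω) ∂P ≤
      (∫⁻ u, decayWeight u ∂μ) * (1 + μ (Metric.closedBall (0 : E) 3)) * Λ := by
  have hval := measurable_decayWeight_mul_enorm_pow (p := p) hf
  have hquot := measurable_decayWeight_mul_enorm_sub_div_pow (p := p) hf
  have hval_le (u : E) : ∫⁻ ω, decayWeight u * ‖f ω u‖ₑ ^ p ∂P ≤ decayWeight u * Λ := by
    rw [lintegral_const_mul' _ _ (decayWeight_ne_top u)]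
    gcongr
    exact h.lintegral_enorm_pow_le u
  have hquot_le (u : E) : ∫⁻ ω, ∫⁻ w in Metric.closedBall 0 3,
      decayWeight u * (‖f ω (u + w) - f ω u‖ₑ / ‖w‖ₑ) ^ p ∂μ ∂P ≤
        decayWeight u * (Λ * μ (Metric.closedBall (0 : E) 3)) := by
    have hmeas := hquot.comp (by fun_prop : Measurable fun z : Ω × E ↦ ((z.1, u), z.2))
    rw [lintegral_lintegral_swap (by exact hmeas.aemeasurable), ← mul_assoc, ← setLIntegral_const]
    refine lintegral_mono fun w ↦ ?_
    dsimp only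
    rw [lintegral_const_mul' _ _ (decayWeight_ne_top u)]
    gcongr
    exact h.lintegral_enorm_sub_div_pow_le hp u w
  calc ∫⁻ ω, sobolevEnergy μ p (f ω) ∂P
      ≤ ∫⁻ u, decayWeight u * Λ ∂μ +
          ∫⁻ u, decayWeight u * (Λ * μ (Metric.closedBall (0 : E) 3)) ∂μ := by
        simp_rw [sobolevEnergy]
        rw [lintegral_add_left hval.lintegral_prod_right]
        refine add_le_add ((lintegral_lintegral_swap ?_).trans_le (lintegral_mono hval_le))
          ((lintegral_lintegral_swap ?_).trans_le (lintegral_mono hquot_le))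
        · exact hval.aemeasurable
        · exact (Measurable.lintegral_prod_right (by exact hquot)).aemeasurable
    _ = (∫⁻ u, decayWeight u ∂μ) * (1 + μ (Metric.closedBall (0 : E) 3)) * Λ := by
        rw [lintegral_mul_const _ measurable_decayWeight,
          lintegral_mul_const _ measurable_decayWeight]
        ring

end RandomEnergy

/-! ### Dyadic sewing along a slowly drifting path -/

section DyadicInterval

/-- `[s, s + h]` is one of the dyadic subintervals of `[0, T]`. -/
def DyadicInterval (T s h : ℝ) : Prop :=
  ∃ n j : ℕ, j < 2 ^ n ∧ s = j * (T / 2 ^ n) ∧ h = T / 2 ^ n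

variable {T s h : ℝ}

theorem dyadicInterval_self (T : ℝ) : DyadicInterval T 0 T := ⟨0, 0, by simp⟩

namespace DyadicInterval

theorem left_half (H : DyadicInterval T s h) : DyadicInterval T s (h / 2) := by
  obtain ⟨n, j, hj, rfl, rfl⟩ := H
  refine ⟨n + 1, 2 * j, by rw [pow_succ]; omega, ?_, ?_⟩
  · push_cast
    field
  · field

theorem right_half (H : DyadicInterval T s h) : DyadicInterval T (s + h / 2) (h / 2) := by
  obtain ⟨n, j, hj, rfl, rfl⟩ := H
  refine ⟨n + 1, 2 * j + 1, by rw [pow_succ]; omega, ?_, ?_⟩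
  · push_cast
    field
  · field

theorem start_nonneg (hT : 0 ≤ T) (H : DyadicInterval T s h) : 0 ≤ s := by
  obtain ⟨n, j, -, rfl, -⟩ := H
  positivity

theorem length_nonneg (hT : 0 ≤ T) (H : DyadicInterval T s h) : 0 ≤ h := by
  obtain ⟨n, j, -, -, rfl⟩ := H
  positivity

theorem end_le (hT : 0 ≤ T) (H : DyadicInterval T s h) : s + h ≤ T := by
  obtain ⟨n, j, hj, rfl, rfl⟩ := H
  have hj' : (j : ℝ) + 1 ≤ 2 ^ n := by exact_mod_cast hj
  calc j * (T / 2 ^ n) + T / 2 ^ n = (j + 1) * (T / 2 ^ n) := by ring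
    _ ≤ 2 ^ n * (T / 2 ^ n) := by gcongr
    _ = T := by field

end DyadicInterval

end DyadicInterval

section Sewing

variable {E : Type*} [NormedAddCommGroup E] [NormedSpace ℝ E]

/-- The path `y` solves `y' = δ f(y + s v)`, all points `y s + r v` with `s, r ∈ [0, T]` lie in the
centred ball of radius `R`, and on that ball `f` and its ray integrals over dyadic intervals of
length `h` are bounded and `η`-Hölder with constants `N` and `N h ^ γ`. -/
structure DriftControl (v : E) (f : E → E) (δ T R N η γ : ℝ) (y : ℝ → E) : Prop where
  hasDerivAt : ∀ s, 0 ≤ s → HasDerivAt y (δ • f (y s + s • v)) s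
  norm_add_smul_le : ∀ s ∈ Icc 0 T, ∀ r ∈ Icc 0 T, ‖y s + r • v‖ ≤ R
  holderBoundedOn_field : HolderBoundedOn f R N η
  holderBoundedOn_rayIntegral : ∀ s h, DyadicInterval T s h →
    HolderBoundedOn (rayIntegral v f s (s + h)) R (N * h ^ γ) η

/-- The error made on `[s, s + h]` by freezing the position at `y s` in the drift. -/
noncomputable def freezingError (v : E) (f : E → E) (δ : ℝ) (y : ℝ → E) (s h : ℝ) : E :=
  y (s + h) - y s - δ • rayIntegral v f s (s + h) (y s)

theorem freezingError_eq_add {v : E} {f : E → E} (hf : Continuous f) (δ : ℝ) (y : ℝ → E)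
    (s h : ℝ) :
    freezingError v f δ y s h = freezingError v f δ y s (h / 2) +
      freezingError v f δ y (s + h / 2) (h / 2) +
      δ • (rayIntegral v f (s + h / 2) (s + h / 2 + h / 2) (y (s + h / 2)) -
        rayIntegral v f (s + h / 2) (s + h / 2 + h / 2) (y s)) := by
  have hend : s + h / 2 + h / 2 = s + h := by ring
  simp only [freezingError, hend, ← rayIntegral_add_adjacent hf s (s + h / 2) (s + h) (y s),
    smul_add, smul_sub]
  abel

/-- The geometric series constant `∑ₙ 2^(n(1-θ))` of the sewing argument, finite for `θ > 1`. -/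
noncomputable def sewingConst (θ : ℝ) : ℝ :=
  1 / (1 - 2 ^ (1 - θ))

theorem two_rpow_one_sub_lt_one {θ : ℝ} (hθ : 1 < θ) : (2 : ℝ) ^ (1 - θ) < 1 :=
  Real.rpow_lt_one_of_one_lt_of_neg one_lt_two (by linarith)

theorem one_le_sewingConst {θ : ℝ} (hθ : 1 < θ) : 1 ≤ sewingConst θ := by
  have := two_rpow_one_sub_lt_one hθ
  rw [sewingConst, le_div_iff₀ (by linarith)]
  linarith [Real.rpow_pos_of_pos two_pos (1 - θ)]

theorem two_rpow_mul_sewingConst_add_one {θ : ℝ} (hθ : 1 < θ) :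
    2 ^ (1 - θ) * (sewingConst θ + 1) ≤ sewingConst θ := by
  have hq := two_rpow_one_sub_lt_one hθ
  have hC : sewingConst θ * (1 - 2 ^ (1 - θ)) = 1 := by
    rw [sewingConst, one_div, inv_mul_cancel₀ (by linarith)]
  linarith

/-- Exponents for which the sewing argument closes: the freezing error on an interval of length `h`
is of order `h ^ (γ * (1 + η))`, hence summable over dyadic partitions. -/
structure SewingExponents (η γ : ℝ) : Prop where
  holder_nonneg : 0 ≤ η
  holder_le_one : η ≤ 1
  time_nonneg : 0 ≤ γ
  time_le_one : γ ≤ 1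
  one_lt_mul : 1 < γ * (1 + η)

theorem SewingExponents.sewingConst_nonneg {η γ : ℝ} (h : SewingExponents η γ) :
    0 ≤ sewingConst (γ * (1 + η)) :=
  zero_le_one.trans (one_le_sewingConst h.one_lt_mul)

namespace DriftControl

variable {v : E} {f : E → E} {δ T R N η γ : ℝ} {y : ℝ → E}

theorem norm_le (H : DriftControl v f δ T R N η γ y) {s : ℝ} (hs : s ∈ Icc 0 T) : ‖y s‖ ≤ R := by
  simpa using H.norm_add_smul_le s hs 0 ⟨le_rfl, hs.1.trans hs.2⟩

theorem norm_sub_le (H : DriftControl v f δ T R N η γ y) (hδ : 0 ≤ δ) {s t : ℝ}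
    (hs : 0 ≤ s) (hst : s ≤ t) (ht : t ≤ T) : ‖y t - y s‖ ≤ δ * N * (t - s) := by
  refine norm_image_sub_le_of_norm_deriv_le_segment' (f' := fun r ↦ δ • f (y r + r • v))
    (fun r hr ↦ (H.hasDerivAt r (hs.trans hr.1)).hasDerivWithinAt) (fun r hr ↦ ?_) t
    (right_mem_Icc.2 hst)
  have hr' : r ∈ Icc 0 T := ⟨hs.trans hr.1, hr.2.le.trans ht⟩
  rw [norm_smul, Real.norm_of_nonneg hδ]
  gcongr
  exact H.holderBoundedOn_field.norm_le _ (H.norm_add_smul_le r hr' r hr')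

theorem freezingError_eq_integral (H : DriftControl v f δ T R N η γ y) [CompleteSpace E]
    (hf : Continuous f) {s h : ℝ} (hs : 0 ≤ s) (hh : 0 ≤ h) :
    freezingError v f δ y s h = ∫ r in s..s + h, δ • (f (y r + r • v) - f (y s + r • v)) := by
  have hpath : ContinuousOn (fun r ↦ f (y r + r • v)) (uIcc s (s + h)) := by
    rw [uIcc_of_le (by linarith)]
    intro r hr
    have := (H.hasDerivAt r (hs.trans hr.1)).continuousAt
    exact ContinuousAt.continuousWithinAt (by fun_prop)
  have hpath_int : IntervalIntegrable (fun r ↦ δ • f (y r + r • v)) volume s (s + h) :=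
    (hpath.const_smul δ).intervalIntegrable
  have hray_int : IntervalIntegrable (fun r ↦ δ • f (y s + r • v)) volume s (s + h) :=
    Continuous.intervalIntegrable (by fun_prop) _ _
  have hincrement : y (s + h) - y s = ∫ r in s..s + h, δ • f (y r + r • v) := by
    refine (intervalIntegral.integral_eq_sub_of_hasDerivAt (fun r hr ↦ ?_) hpath_int).symm
    rw [uIcc_of_le (by linarith)] at hr
    exact H.hasDerivAt r (hs.trans hr.1)
  simp_rw [smul_sub]
  rw [intervalIntegral.integral_sub hpath_int hray_int, ← hincrement,
    intervalIntegral.integral_smul]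
  rfl

theorem norm_freezingError_le (H : DriftControl v f δ T R N η γ y) [CompleteSpace E]
    (hf : Continuous f) (hδ : 0 ≤ δ) (hN : 0 ≤ N) (hη : 0 ≤ η) {s h : ℝ} (hs : 0 ≤ s) (hh : 0 ≤ h)
    (hsh : s + h ≤ T) : ‖freezingError v f δ y s h‖ ≤ (δ * N * h) ^ (1 + η) := by
  rw [H.freezingError_eq_integral hf hs hh]
  have hintegrand : ∀ r ∈ uIoc s (s + h), ‖δ • (f (y r + r • v) - f (y s + r • v))‖ ≤
      δ * (N * (δ * N * h) ^ η) := fun r hr ↦ by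
    rw [uIoc_of_le (by linarith)] at hr
    have hr' : r ∈ Icc 0 T := ⟨hs.trans hr.1.le, hr.2.trans hsh⟩
    have hs' : s ∈ Icc 0 T := ⟨hs, by linarith⟩
    rw [norm_smul, Real.norm_of_nonneg hδ]
    gcongr
    refine (H.holderBoundedOn_field.norm_sub_le _ _ (H.norm_add_smul_le r hr' r hr')
      (H.norm_add_smul_le s hs' r hr')).trans ?_
    gcongr
    rw [add_sub_add_right_eq_sub]
    refine (H.norm_sub_le hδ hs hr.1.le hr'.2).trans ?_
    gcongr
    linarith [hr.2]
  calc _ ≤ δ * (N * (δ * N * h) ^ η) * |s + h - s| :=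
        intervalIntegral.norm_integral_le_of_norm_le_const hintegrand
    _ = (δ * N * h) ^ (1 + η) := by
        rw [add_sub_cancel_left, abs_of_nonneg hh,
          Real.rpow_one_add' (by positivity) (by positivity)]
        ring

theorem norm_sub_le_of_norm_freezingError_le (H : DriftControl v f δ T R N η γ y) (hδ : 0 ≤ δ)
    (hN : 0 ≤ N) (hη : 0 ≤ η) (hγ : 0 ≤ γ) (hT : 0 ≤ T) {C : ℝ} (hC : 0 ≤ C)
    (hsmall : C * (δ * N * T ^ γ) ^ η ≤ 1) {s h : ℝ} (hI : DyadicInterval T s h)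
    (herr : ‖freezingError v f δ y s h‖ ≤ C * (δ * N * h ^ γ) ^ (1 + η)) :
    ‖y (s + h) - y s‖ ≤ 2 * (δ * N * h ^ γ) := by
  have hs := hI.start_nonneg hT
  have hh := hI.length_nonneg hT
  have hend := hI.end_le hT
  have hlinear : ‖δ • rayIntegral v f s (s + h) (y s)‖ ≤ δ * N * h ^ γ := by
    rw [norm_smul, Real.norm_of_nonneg hδ, mul_assoc]
    gcongr
    exact (H.holderBoundedOn_rayIntegral s h hI).norm_le _ (H.norm_le ⟨hs, by linarith⟩)
  have herror : ‖freezingError v f δ y s h‖ ≤ δ * N * h ^ γ :=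
    calc ‖freezingError v f δ y s h‖ ≤ δ * N * h ^ γ * (C * (δ * N * h ^ γ) ^ η) := by
          rw [Real.rpow_one_add' (by positivity) (by positivity)] at herr
          linarith
      _ ≤ δ * N * h ^ γ * (C * (δ * N * T ^ γ) ^ η) := by
          gcongr
          linarith
      _ ≤ δ * N * h ^ γ := mul_le_of_le_one_right (by positivity) hsmall
  calc ‖y (s + h) - y s‖
      = ‖freezingError v f δ y s h + δ • rayIntegral v f s (s + h) (y s)‖ := by
        rw [freezingError, sub_add_cancel]
    _ ≤ 2 * (δ * N * h ^ γ) := (norm_add_le _ _).trans (by linarith)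

theorem norm_smul_rayIntegral_sub_le (H : DriftControl v f δ T R N η γ y) (hδ : 0 ≤ δ)
    (hN : 0 ≤ N) (hη : 0 ≤ η) (hη1 : η ≤ 1) (hT : 0 ≤ T) {s h : ℝ}
    (hs : s ∈ Icc 0 T) (hI : DyadicInterval T (s + h) h)
    (hinc : ‖y (s + h) - y s‖ ≤ 2 * (δ * N * h ^ γ)) :
    ‖δ • (rayIntegral v f (s + h) (s + h + h) (y (s + h)) -
      rayIntegral v f (s + h) (s + h + h) (y s))‖ ≤ 2 * (δ * N * h ^ γ) ^ (1 + η) := by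
  have hh := hI.length_nonneg hT
  have hmid : s + h ∈ Icc 0 T := ⟨hI.start_nonneg hT, by linarith [hI.end_le hT]⟩
  rw [norm_smul, Real.norm_of_nonneg hδ]
  calc δ * ‖_‖ ≤ δ * (N * h ^ γ * (2 * (δ * N * h ^ γ)) ^ η) := by
        gcongr
        refine ((H.holderBoundedOn_rayIntegral _ h hI).norm_sub_le _ _ (H.norm_le hmid)
          (H.norm_le hs)).trans ?_
        gcongr
    _ = 2 ^ η * (δ * N * h ^ γ) ^ (1 + η) := by
        rw [Real.mul_rpow two_pos.le (by positivity),
          Real.rpow_one_add' (by positivity) (by positivity)]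
        ring
    _ ≤ 2 * (δ * N * h ^ γ) ^ (1 + η) := by
        gcongr
        exact Real.rpow_le_self_of_one_le one_le_two hη1

theorem norm_freezingError_le_of_halves (H : DriftControl v f δ T R N η γ y)
    (hexp : SewingExponents η γ) (hf : Continuous f) (hδ : 0 ≤ δ) (hN : 0 ≤ N) (hT : 0 ≤ T)
    (hsmall : sewingConst (γ * (1 + η)) * (δ * N * T ^ γ) ^ η ≤ 1)
    {s h : ℝ} (hI : DyadicInterval T s h)
    (hleft : ‖freezingError v f δ y s (h / 2)‖ ≤
      sewingConst (γ * (1 + η)) * (δ * N * (h / 2) ^ γ) ^ (1 + η))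
    (hright : ‖freezingError v f δ y (s + h / 2) (h / 2)‖ ≤
      sewingConst (γ * (1 + η)) * (δ * N * (h / 2) ^ γ) ^ (1 + η)) :
    ‖freezingError v f δ y s h‖ ≤ sewingConst (γ * (1 + η)) * (δ * N * h ^ γ) ^ (1 + η) := by
  have hh := hI.length_nonneg hT
  have hs : s ∈ Icc 0 T := ⟨hI.start_nonneg hT, by linarith [hI.end_le hT]⟩
  have hC := hexp.sewingConst_nonneg
  obtain ⟨hη, hη1, hγ, -, hθ⟩ := hexp
  have hcross := H.norm_smul_rayIntegral_sub_le hδ hN hη hη1 hT hs hI.right_half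
    (H.norm_sub_le_of_norm_freezingError_le hδ hN hη hγ hT hC hsmall hI.left_half hleft)
  set θ := γ * (1 + η)
  have hscale : 2 * (δ * N * (h / 2) ^ γ) ^ (1 + η) =
      2 ^ (1 - θ) * (δ * N * h ^ γ) ^ (1 + η) := by
    rw [Real.div_rpow hh two_pos.le, ← mul_div_assoc, Real.div_rpow (by positivity) (by positivity),
      ← Real.rpow_mul two_pos.le, Real.rpow_sub two_pos, Real.rpow_one]
    ring
  rw [freezingError_eq_add hf]
  calc ‖_‖ ≤ (sewingConst θ + 1) * (2 * (δ * N * (h / 2) ^ γ) ^ (1 + η)) :=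
        norm_add₃_le.trans (by linarith)
    _ = 2 ^ (1 - θ) * (sewingConst θ + 1) * (δ * N * h ^ γ) ^ (1 + η) := by
        rw [hscale]
        ring
    _ ≤ sewingConst θ * (δ * N * h ^ γ) ^ (1 + η) := by
        gcongr
        exact two_rpow_mul_sewingConst_add_one hθ

theorem norm_freezingError_le_sewingConst_mul (H : DriftControl v f δ T R N η γ y)
    [CompleteSpace E] (hexp : SewingExponents η γ) (hf : Continuous f) (hδ : 0 ≤ δ) (hN : 0 ≤ N)
    (hT : 0 ≤ T)
    (hsmall : sewingConst (γ * (1 + η)) * (δ * N * T ^ γ) ^ η ≤ 1) (n : ℕ) :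
    ∀ s h, DyadicInterval T s h → h ≤ 2 ^ n →
      ‖freezingError v f δ y s h‖ ≤ sewingConst (γ * (1 + η)) * (δ * N * h ^ γ) ^ (1 + η) := by
  induction n with
  | zero =>
    intro s h hI hh1
    have hh := hI.length_nonneg hT
    have hη := hexp.holder_nonneg
    rw [pow_zero] at hh1
    calc ‖freezingError v f δ y s h‖ ≤ (δ * N * h) ^ (1 + η) :=
          H.norm_freezingError_le hf hδ hN hη (hI.start_nonneg hT) hh (hI.end_le hT)
      _ ≤ (δ * N * h ^ γ) ^ (1 + η) := by
          gcongr
          exact Real.self_le_rpow_of_le_one hh hh1 hexp.time_le_one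
      _ ≤ _ := le_mul_of_one_le_left (by positivity) (one_le_sewingConst hexp.one_lt_mul)
  | succ n ih =>
    intro s h hI hhn
    have hhalf : h / 2 ≤ 2 ^ n := by rw [pow_succ] at hhn; linarith
    exact H.norm_freezingError_le_of_halves hexp hf hδ hN hT hsmall hI
      (ih _ _ hI.left_half hhalf) (ih _ _ hI.right_half hhalf)

theorem norm_sub_zero_le (H : DriftControl v f δ T R N η γ y) [CompleteSpace E]
    (hexp : SewingExponents η γ) (hf : Continuous f) (hδ : 0 ≤ δ) (hN : 0 ≤ N) (hT : 0 ≤ T)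
    (hsmall : sewingConst (γ * (1 + η)) * (δ * N * T ^ γ) ^ η ≤ 1) :
    ‖y T - y 0‖ ≤ 2 * (δ * N * T ^ γ) := by
  obtain ⟨n, hn⟩ := pow_unbounded_of_one_lt T one_lt_two
  have hI := dyadicInterval_self T
  have herr := H.norm_freezingError_le_sewingConst_mul hexp hf hδ hN hT hsmall n 0 T hI hn.le
  simpa using H.norm_sub_le_of_norm_freezingError_le hδ hN hexp.holder_nonneg hexp.time_nonneg hT
    hexp.sewingConst_nonneg hsmall hI herr

end DriftControl

end Sewing

/-! ### Displacement of a single trajectory -/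

section Trajectory

theorem le_five_mul_sq_of_le_add_mul_sqrt {M b : ℝ} (hM : 0 ≤ M) (hb : 1 ≤ b)
    (h : M ≤ b + b * √(2 + M)) : M ≤ 5 * b ^ 2 := by
  have hsq : √(2 + M) ^ 2 = 2 + M := Real.sq_sqrt (by linarith)
  nlinarith [sq_nonneg (√(2 + M) - b)]

variable {E : Type*} [NormedAddCommGroup E] [NormedSpace ℝ E]

/-- `X` starts at the origin and solves `X' = v + δ f(X)` on `[0, ∞)`. -/
def IsDriftSolution (v : E) (f : E → E) (δ : ℝ) (X : ℝ → E) : Prop :=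
  X 0 = 0 ∧ ∀ s, 0 ≤ s → HasDerivAt X (v + δ • f (X s)) s

/-- Hölder bounds for `f` and its ray integrals over dyadic subintervals of `[0, T]` whose constants
grow polynomially, with exponent `e`, in the radius of the ball. -/
structure TemperedHolderBound (v : E) (f : E → E) (T m e η γ : ℝ) : Prop where
  field : ∀ R, HolderBoundedOn f R (m * (2 + R) ^ e) η
  rayIntegral : ∀ R s h, DyadicInterval T s h →
    HolderBoundedOn (rayIntegral v f s (s + h)) R (m * (2 + R) ^ e * h ^ γ) η

/-- The Hölder constant that a tempered bound with constant `m` and exponent `e` yields on the ball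
of radius `7 (B m)²`, which no trajectory leaves before time `B`. -/
noncomputable def temperedScale (B m e : ℝ) : ℝ :=
  m * (3 * (B * m)) ^ (2 * e)

theorem mul_two_add_rpow_le_temperedScale {B m e : ℝ} (hB : 1 ≤ B) (hm : 1 ≤ m) (he : 0 ≤ e) :
    m * (2 + 7 * (B * m) ^ 2) ^ e ≤ temperedScale B m e := by
  have hBm : 1 ≤ B * m := one_le_mul_of_one_le_of_one_le hB hm
  rw [temperedScale, Real.rpow_mul (by positivity), Real.rpow_two]
  gcongr
  nlinarith

variable {v : E} {f : E → E} {δ T B m e η γ : ℝ} {X : ℝ → E}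

theorem TemperedHolderBound.norm_le_mul_sqrt (h : TemperedHolderBound v f T m e η γ) (hm : 0 ≤ m)
    (he : e ≤ 1 / 2) (x : E) : ‖f x‖ ≤ m * √(2 + ‖x‖) := by
  refine ((h.field ‖x‖).norm_le x le_rfl).trans ?_
  rw [Real.sqrt_eq_rpow]
  gcongr
  linarith [norm_nonneg x]

namespace IsDriftSolution

theorem norm_le (hX : IsDriftSolution v f δ X) (hv : ‖v‖ ≤ 1) (hδ : 0 ≤ δ) (hδ1 : δ ≤ 1)
    (hf : ∀ x, ‖f x‖ ≤ m * √(2 + ‖x‖)) (hT : T ≤ B) (hB : 1 ≤ B) (hm : 1 ≤ m) {s : ℝ}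
    (hs : s ∈ Icc 0 T) : ‖X s‖ ≤ 5 * (B * m) ^ 2 := by
  have hcont : ContinuousOn (fun s ↦ ‖X s‖) (Icc 0 T) := fun r hr ↦
    (hX.2 r hr.1).continuousAt.norm.continuousWithinAt
  obtain ⟨s₀, hs₀, hmax⟩ := isCompact_Icc.exists_isMaxOn ⟨s, hs⟩ hcont
  refine (hmax hs).trans <| le_five_mul_sq_of_le_add_mul_sqrt (norm_nonneg _)
    (one_le_mul_of_one_le_of_one_le hB hm) ?_
  have hspeed : ∀ r ∈ Ico 0 T, ‖v + δ • f (X r)‖ ≤ 1 + m * √(2 + ‖X s₀‖) := fun r hr ↦ by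
    calc ‖v + δ • f (X r)‖ ≤ ‖v‖ + δ * ‖f (X r)‖ :=
          (norm_add_le _ _).trans_eq (by rw [norm_smul, Real.norm_of_nonneg hδ])
      _ ≤ 1 + 1 * (m * √(2 + ‖X s₀‖)) := by
          gcongr
          refine (hf _).trans ?_
          gcongr
          exact hmax (Ico_subset_Icc_self hr)
      _ = 1 + m * √(2 + ‖X s₀‖) := by rw [one_mul]
  have htravel := norm_image_sub_le_of_norm_deriv_le_segment'
    (fun r hr ↦ (hX.2 r hr.1).hasDerivWithinAt) hspeed s₀ hs₀
  rw [hX.1, sub_zero, sub_zero] at htravel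
  calc ‖X s₀‖ ≤ (1 + m * √(2 + ‖X s₀‖)) * B := htravel.trans (by gcongr; exact hs₀.2.trans hT)
    _ ≤ B * m + B * m * √(2 + ‖X s₀‖) := by nlinarith

theorem norm_sub_smul_add_smul_le (hX : IsDriftSolution v f δ X) (hv : ‖v‖ ≤ 1) (hδ : 0 ≤ δ)
    (hδ1 : δ ≤ 1) (hf : ∀ x, ‖f x‖ ≤ m * √(2 + ‖x‖)) (hT : T ≤ B) (hB : 1 ≤ B) (hm : 1 ≤ m)
    {s r : ℝ} (hs : s ∈ Icc 0 T) (hr : r ∈ Icc 0 T) :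
    ‖X s - s • v + r • v‖ ≤ 7 * (B * m) ^ 2 := by
  have hray : ∀ r ∈ Icc 0 T, ‖r • v‖ ≤ (B * m) ^ 2 := fun r hr ↦ by
    calc ‖r • v‖ ≤ r * 1 := by
          rw [norm_smul, Real.norm_of_nonneg hr.1]
          exact mul_le_mul_of_nonneg_left hv hr.1
      _ ≤ B * m := mul_le_mul (hr.2.trans hT) hm zero_le_one (by linarith)
      _ ≤ (B * m) ^ 2 := le_self_pow₀ (one_le_mul_of_one_le_of_one_le hB hm) two_ne_zero
  have hposition := hX.norm_le hv hδ hδ1 hf hT hB hm hs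
  linarith [norm_add_le (X s - s • v) (r • v), norm_sub_le (X s) (s • v), hray s hs, hray r hr]

theorem driftControl (hX : IsDriftSolution v f δ X) (h : TemperedHolderBound v f T m e η γ)
    (hv : ‖v‖ ≤ 1) (hδ : 0 ≤ δ) (hδ1 : δ ≤ 1) (he : 0 ≤ e) (he2 : e ≤ 1 / 2) (hT0 : 0 ≤ T)
    (hT : T ≤ B) (hB : 1 ≤ B) (hm : 1 ≤ m) :
    DriftControl v f δ T (7 * (B * m) ^ 2) (temperedScale B m e) η γ fun s ↦ X s - s • v where
  hasDerivAt s hs := by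
    simpa using (hX.2 s hs).fun_sub ((hasDerivAt_id' s).smul_const v)
  norm_add_smul_le s hs r hr := hX.norm_sub_smul_add_smul_le hv hδ hδ1
    (h.norm_le_mul_sqrt (by linarith) he2) hT hB hm hs hr
  holderBoundedOn_field := (h.field _).mono (mul_two_add_rpow_le_temperedScale hB hm he)
  holderBoundedOn_rayIntegral s h' hI := (h.rayIntegral _ s h' hI).mono <| by
    have := hI.length_nonneg hT0
    gcongr
    exact mul_two_add_rpow_le_temperedScale hB hm he

theorem norm_sub_smul_le_of_small [CompleteSpace E] (hX : IsDriftSolution v f δ X)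
    (h : TemperedHolderBound v f T m e η γ) (hexp : SewingExponents η γ)
    (hf : Continuous f) (hv : ‖v‖ ≤ 1) (hδ : 0 ≤ δ) (hδ1 : δ ≤ 1) (he : 0 ≤ e) (he2 : e ≤ 1 / 2)
    (hT0 : 0 ≤ T) (hT : T ≤ B) (hB : 1 ≤ B) (hm : 1 ≤ m)
    (hsmall : sewingConst (γ * (1 + η)) * (δ * temperedScale B m e * B ^ γ) ^ η ≤ 1) :
    ‖X T - T • v‖ ≤ 2 * (δ * temperedScale B m e * B ^ γ) := by
  have hN : 0 ≤ temperedScale B m e := by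
    rw [temperedScale]
    positivity
  have hC := hexp.sewingConst_nonneg
  have hη := hexp.holder_nonneg
  have hγ := hexp.time_nonneg
  have hsewn := (hX.driftControl h hv hδ hδ1 he he2 hT0 hT hB hm).norm_sub_zero_le hexp hf
    hδ hN hT0 (hsmall.trans' (by gcongr))
  simp only [hX.1, zero_smul, sub_zero] at hsewn
  exact hsewn.trans (by gcongr)

theorem norm_sub_smul_sq_le [CompleteSpace E] {C σ L : ℝ} {p : ℕ} (hX : IsDriftSolution v f δ X)
    (h : TemperedHolderBound v f T (C * σ) e η γ) (hexp : SewingExponents η γ)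
    (hf : Continuous f) (hv : ‖v‖ ≤ 1) (hδ : 0 ≤ δ) (hδ1 : δ ≤ 1) (he : 0 ≤ e) (he2 : e ≤ 1 / 2)
    (hT0 : 0 ≤ T) (hT : T ≤ B) (hB : 1 ≤ B) (hC : 1 ≤ C)
    (hσ : 1 ≤ σ) (hL : 0 < L) (hp : 4 ≤ p)
    (hsmall : sewingConst (γ * (1 + η)) * (δ * temperedScale B (C * L) e * B ^ γ) ^ η ≤ 1) :
    ‖X T - T • v‖ ^ 2 ≤ (2 * (δ * temperedScale B (C * L) e * B ^ γ)) ^ 2 +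
      49 * (B * C) ^ 4 / L ^ (p - 4) * σ ^ p := by
  have hm : 1 ≤ C * σ := one_le_mul_of_one_le_of_one_le hC hσ
  rcases le_or_gt σ L with hσL | hLσ
  · have hscale : δ * temperedScale B (C * σ) e * B ^ γ ≤
        δ * temperedScale B (C * L) e * B ^ γ := by
      unfold temperedScale
      gcongr
    have hSC := hexp.sewingConst_nonneg
    have hη := hexp.holder_nonneg
    have hscale0 : 0 ≤ δ * temperedScale B (C * σ) e * B ^ γ := by
      unfold temperedScale
      positivity
    have hdisp := hX.norm_sub_smul_le_of_small h hexp hf hv hδ hδ1 he he2 hT0 hT hB hm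
      (hsmall.trans' (by gcongr))
    exact le_add_of_le_of_nonneg (by gcongr; exact hdisp.trans (by gcongr)) (by positivity)
  · have hdisp : ‖X T - T • v‖ ≤ 7 * (B * (C * σ)) ^ 2 := by
      simpa using hX.norm_sub_smul_add_smul_le hv hδ hδ1 (h.norm_le_mul_sqrt (by linarith) he2) hT
        hB hm (right_mem_Icc.2 hT0) (left_mem_Icc.2 hT0)
    refine le_add_of_nonneg_of_le (sq_nonneg _) ?_
    calc ‖X T - T • v‖ ^ 2 ≤ (7 * (B * (C * σ)) ^ 2) ^ 2 := by gcongr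
      _ = 49 * (B * C) ^ 4 / L ^ (p - 4) * (σ ^ 4 * L ^ (p - 4)) := by field
      _ ≤ 49 * (B * C) ^ 4 / L ^ (p - 4) * (σ ^ 4 * σ ^ (p - 4)) := by gcongr
      _ = 49 * (B * C) ^ 4 / L ^ (p - 4) * σ ^ p := by rw [← pow_add, Nat.add_sub_cancel' hp]

end IsDriftSolution

end Trajectory

/-! ### Total energy over all dyadic time intervals -/

section DyadicEnergy

variable {E : Type*} [NormedAddCommGroup E] [NormedSpace ℝ E] [MeasurableSpace E]

/-- The Sobolev energy of the ray integral of `f` over `[s, s + h]`, weighted by `h ^ (-γ * p)`. -/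
noncomputable def weightedRayEnergy (μ : Measure E) (p : ℕ) (v : E) (γ : ℝ) (f : E → E)
    (s h : ℝ) : ENNReal :=
  (ENNReal.ofReal ((h ^ γ) ^ p))⁻¹ * sobolevEnergy μ p (rayIntegral v f s (s + h))

/-- One plus the Sobolev energy of `f` plus the weighted ray energies of all dyadic subintervals of
`[0, T]`. -/
noncomputable def dyadicEnergy (μ : Measure E) (p : ℕ) (v : E) (γ T : ℝ) (f : E → E) : ENNReal :=
  1 + sobolevEnergy μ p f + ∑' n : ℕ, ∑ j ∈ Finset.range (2 ^ n),
    weightedRayEnergy μ p v γ f (j * (T / 2 ^ n)) (T / 2 ^ n)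

section Pathwise

variable (μ : Measure E) (p : ℕ) (v : E) (γ T : ℝ) (f : E → E)

theorem one_le_dyadicEnergy : 1 ≤ dyadicEnergy μ p v γ T f := by
  rw [dyadicEnergy, add_assoc]
  exact le_self_add

theorem sobolevEnergy_le_dyadicEnergy : sobolevEnergy μ p f ≤ dyadicEnergy μ p v γ T f := by
  rw [dyadicEnergy, add_comm 1, add_assoc]
  exact le_self_add

variable {T}

theorem sobolevEnergy_rayIntegral_le {s h : ℝ} (hT : 0 < T) (hI : DyadicInterval T s h) :
    sobolevEnergy μ p (rayIntegral v f s (s + h)) ≤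
      dyadicEnergy μ p v γ T f * ENNReal.ofReal ((h ^ γ) ^ p) := by
  obtain ⟨n, j, hj, rfl, rfl⟩ := hI
  have hweight : 0 < ((T / 2 ^ n) ^ γ) ^ p := by positivity
  rw [← ENNReal.div_le_iff (ENNReal.ofReal_pos.2 hweight).ne' ENNReal.ofReal_ne_top,
    ENNReal.div_eq_inv_mul]
  refine le_trans ?_ (le_add_self.trans' (ENNReal.le_tsum n))
  exact Finset.single_le_sum
    (f := fun j : ℕ ↦ weightedRayEnergy μ p v γ f (j * (T / 2 ^ n)) (T / 2 ^ n))
    (fun _ _ ↦ zero_le) (Finset.mem_range.2 hj)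

variable (E) {p} in
theorem exists_temperedHolderBound [FiniteDimensional ℝ E] [BorelSpace E] [μ.IsAddHaarMeasure]
    (hp : 2 * Module.finrank ℝ E < p) :
    ∃ C : ℝ, 1 ≤ C ∧ ∀ (v : E) (f : E → E) (γ T : ℝ), Continuous f → 0 < T →
      dyadicEnergy μ p v γ T f ≠ ⊤ →
      TemperedHolderBound v f T (C * (dyadicEnergy μ p v γ T f).toReal ^ (p : ℝ)⁻¹)
        (((Module.finrank ℝ E : ℝ) + 1) / p) (1 - 2 * (Module.finrank ℝ E : ℝ) / p) γ := by
  obtain ⟨C, hC, hholder⟩ := exists_holderBoundedOn_of_sobolevEnergy_le E E μ p hp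
  refine ⟨C, hC, fun v f γ T hf hT hfin ↦ ⟨fun R ↦ ?_, fun R s h hI ↦ ?_⟩⟩
  · convert hholder f R _ hf ENNReal.toReal_nonneg ?_ using 1
    · exact mul_right_comm _ _ _
    · rw [ENNReal.ofReal_toReal hfin]
      exact sobolevEnergy_le_dyadicEnergy μ p v γ T f
  · have hh := hI.length_nonneg hT.le
    convert hholder (rayIntegral v f s (s + h)) R
      ((dyadicEnergy μ p v γ T f).toReal * (h ^ γ) ^ p) (continuous_rayIntegral hf _ _)
      (by positivity) ?_ using 1
    · rw [Real.mul_rpow ENNReal.toReal_nonneg (by positivity),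
        Real.pow_rpow_inv_natCast (by positivity) (by omega)]
      ring
    · rw [ENNReal.ofReal_mul ENNReal.toReal_nonneg, ENNReal.ofReal_toReal hfin]
      exact sobolevEnergy_rayIntegral_le μ p v γ f hT hI

end Pathwise

section Expectation

theorem two_pow_mul_div_two_pow_rpow_le {T κ : ℝ} (hT : 0 ≤ T) (hκ : 2 ≤ κ) (n : ℕ) :
    2 ^ n * (T / 2 ^ n) ^ κ ≤ T ^ κ * (1 / 2) ^ n := by
  have hpow : ((2 : ℝ) ^ n) ^ 2 ≤ (2 ^ n) ^ κ := by
    rw [← Real.rpow_two]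
    exact Real.rpow_le_rpow_of_exponent_le (one_le_pow₀ one_le_two) hκ
  rw [Real.div_rpow hT (by positivity), ← mul_div_assoc, div_le_iff₀ (by positivity), mul_comm,
    mul_assoc]
  gcongr
  calc (2 : ℝ) ^ n = (1 / 2) ^ n * (2 ^ n) ^ 2 := by
        rw [one_div, inv_pow]
        field
    _ ≤ (1 / 2) ^ n * (2 ^ n) ^ κ := by gcongr

variable [BorelSpace E] [SecondCountableTopology E] {μ : Measure E} [SFinite μ] {p : ℕ} {v : E}
  {Ω : Type*} [MeasurableSpace Ω] {P : Measure Ω} {F : Ω → E → E}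

theorem measurable_weightedRayEnergy (hF : Measurable (Function.uncurry F)) (γ s h : ℝ) :
    Measurable fun ω ↦ weightedRayEnergy μ p v γ (F ω) s h :=
  (measurable_sobolevEnergy μ (measurable_uncurry_rayIntegral hF v s (s + h))).const_mul _

theorem lintegral_weightedRayEnergy_le (hF : Measurable (Function.uncurry F)) {Λ : ENNReal}
    {β γ s h : ℝ} (hh : 0 < h)
    (hray : ∫⁻ ω, sobolevEnergy μ p (rayIntegral v (F ω) s (s + h)) ∂P ≤
      Λ * ENNReal.ofReal ((h ^ β) ^ p)) :
    ∫⁻ ω, weightedRayEnergy μ p v γ (F ω) s h ∂P ≤ Λ * ENNReal.ofReal (h ^ ((β - γ) * p)) := by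
  simp_rw [weightedRayEnergy]
  rw [lintegral_const_mul _ (measurable_sobolevEnergy μ (measurable_uncurry_rayIntegral hF v _ _)),
    Real.rpow_mul_natCast hh.le, Real.rpow_sub hh, div_pow,
    ENNReal.ofReal_div_of_pos (by positivity), ENNReal.div_eq_inv_mul, mul_left_comm]
  gcongr

theorem lintegral_dyadicEnergy_le [IsProbabilityMeasure P] (hF : Measurable (Function.uncurry F))
    {Λ : ENNReal} {β γ T : ℝ} (hT : 0 < T) (hκ : 2 ≤ (β - γ) * p)
    (hfield : ∫⁻ ω, sobolevEnergy μ p (F ω) ∂P ≤ Λ)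
    (hray : ∀ s l, 0 < l → ∫⁻ ω, sobolevEnergy μ p (rayIntegral v (F ω) s (s + l)) ∂P ≤
      Λ * ENNReal.ofReal ((l ^ β) ^ p)) :
    ∫⁻ ω, dyadicEnergy μ p v γ T (F ω) ∂P ≤
      1 + Λ + Λ * ENNReal.ofReal (T ^ ((β - γ) * p)) * 2 := by
  have hlevel (n : ℕ) : ∫⁻ ω, ∑ j ∈ Finset.range (2 ^ n),
      weightedRayEnergy μ p v γ (F ω) (j * (T / 2 ^ n)) (T / 2 ^ n) ∂P ≤
        Λ * ENNReal.ofReal (T ^ ((β - γ) * p)) * ENNReal.ofReal ((1 / 2) ^ n) := by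
    have hh : 0 < T / 2 ^ n := by positivity
    rw [lintegral_finsetSum _ fun j _ ↦ measurable_weightedRayEnergy hF γ _ _]
    refine (Finset.sum_le_card_nsmul _ _ _ fun j _ ↦
      lintegral_weightedRayEnergy_le hF hh (hray _ _ hh)).trans ?_
    rw [Finset.card_range, nsmul_eq_mul, mul_left_comm, mul_assoc,
      ← ENNReal.ofReal_natCast, ← ENNReal.ofReal_mul (by positivity),
      ← ENNReal.ofReal_mul (by positivity), Nat.cast_pow, Nat.cast_ofNat]
    gcongr Λ * ENNReal.ofReal ?_
    exact two_pow_mul_div_two_pow_rpow_le hT.le hκ n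
  have hgeom : ∑' n : ℕ, ENNReal.ofReal ((1 / 2) ^ n) = 2 := by
    rw [← ENNReal.ofReal_tsum_of_nonneg (fun n ↦ by positivity) summable_geometric_two,
      tsum_geometric_two, ENNReal.ofReal_ofNat]
  unfold dyadicEnergy
  rw [lintegral_add_left ((measurable_sobolevEnergy μ hF).const_add 1),
    lintegral_add_left measurable_const, lintegral_one, measure_univ,
    lintegral_tsum fun n ↦ (Finset.measurable_sum _ fun j _ ↦
      measurable_weightedRayEnergy hF γ _ _).aemeasurable, ← hgeom, ← ENNReal.tsum_mul_left]
  gcongr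
  exact hlevel _

end Expectation

end DyadicEnergy

section SpectralEnergy

variable {E : Type*} [NormedAddCommGroup E] [InnerProductSpace ℝ E] [MeasurableSpace E]
  [BorelSpace E] [FiniteDimensional ℝ E] (μ : Measure E) [μ.IsAddHaarMeasure] {K β : ℝ} {v : E}
  {Ω : Type*} [MeasurableSpace Ω] {P : Measure Ω} {F : Ω → E → E} {p : ℕ} {C : ENNReal}

theorem SpectralMomentBound.exists_lintegral_sobolevEnergy_le [SFinite P]
    (H : SpectralMomentBound K β v P F p C) (hC : C ≠ ⊤) (hK : 0 ≤ K) (hβ0 : 0 ≤ β) (hβ1 : β ≤ 1)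
    (hv : ‖v‖ ≤ 1) (hF : Measurable (Function.uncurry F)) (hF_cont : ∀ᵐ ω ∂P, Continuous (F ω))
    (hp : p ≠ 0) :
    ∃ Λ ≠ ⊤, ∫⁻ ω, sobolevEnergy μ p (F ω) ∂P ≤ Λ ∧ ∀ s l, 0 < l →
      ∫⁻ ω, sobolevEnergy μ p (rayIntegral v (F ω) s (s + l)) ∂P ≤
        Λ * ENNReal.ofReal ((l ^ β) ^ p) := by
  have hweight := lintegral_decayWeight_ne_top μ
  have hball : μ (Metric.closedBall (0 : E) 3) ≠ ⊤ := measure_closedBall_lt_top.ne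
  set W := (∫⁻ u, decayWeight u ∂μ) * (1 + μ (Metric.closedBall (0 : E) 3))
  have hW : W ≠ ⊤ := by finiteness
  set Λ₀ := W * (C * ENNReal.ofReal (K ^ (1 - β)) ^ p * ENNReal.ofReal (1 + K) ^ p)
  set Λ₁ := W * (C * ENNReal.ofReal (Real.pi ^ (1 - β)) ^ p * ENNReal.ofReal (1 + K) ^ p)
  have hfield := (SpectralMomentBound.hasLipschitzMoments hK
    (H.to_one hK hβ1 hv)).lintegral_sobolevEnergy_le μ hF hp
  refine ⟨max Λ₀ Λ₁, max_ne_top (by finiteness) (by finiteness), hfield.trans (le_max_left _ _),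
    fun s l hl ↦ ?_⟩
  have hray := (SpectralMomentBound.hasLipschitzMoments hK
    (H.along_ray hβ0 hβ1 hv (fun _ ↦ hF.of_uncurry_right) hF_cont s hl)).lintegral_sobolevEnergy_le
      μ (measurable_uncurry_rayIntegral hF v s (s + l)) hp
  calc _ ≤ W * (C * ENNReal.ofReal (l ^ β * Real.pi ^ (1 - β)) ^ p * ENNReal.ofReal (1 + K) ^ p) :=
        hray
    _ = Λ₁ * ENNReal.ofReal ((l ^ β) ^ p) := by
        rw [ENNReal.ofReal_mul (by positivity), mul_pow, ENNReal.ofReal_pow (by positivity)]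
        ring
    _ ≤ max Λ₀ Λ₁ * ENNReal.ofReal ((l ^ β) ^ p) := by
        gcongr
        exact le_max_right _ _

end SpectralEnergy

/-! ### Mean-square displacement -/

section MeanSquare

variable {E : Type*} [NormedAddCommGroup E] [NormedSpace ℝ E] [CompleteSpace E] {v : E}
  {Ω : Type*} [MeasurableSpace Ω] {P : Measure Ω} {F : Ω → E → E} {p : ℕ}

theorem lintegral_enorm_sub_smul_sq_le [IsProbabilityMeasure P] {X : Ω → ℝ → E} {S : Ω → ENNReal}
    {C L B T δ e η γ : ℝ} (hX : ∀ᵐ ω ∂P, IsDriftSolution v (F ω) δ (X ω))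
    (hF : ∀ᵐ ω ∂P, Continuous (F ω)) (hS : ∀ ω, 1 ≤ S ω)
    (hholder : ∀ᵐ ω ∂P, S ω ≠ ⊤ →
      TemperedHolderBound v (F ω) T (C * (S ω).toReal ^ (p : ℝ)⁻¹) e η γ)
    (hexp : SewingExponents η γ) (hv : ‖v‖ ≤ 1) (hδ : 0 ≤ δ) (hδ1 : δ ≤ 1) (he : 0 ≤ e)
    (he2 : e ≤ 1 / 2) (hT0 : 0 ≤ T) (hT : T ≤ B) (hB : 1 ≤ B) (hC : 1 ≤ C) (hL : 0 < L)
    (hp : 4 ≤ p)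
    (hsmall : sewingConst (γ * (1 + η)) * (δ * temperedScale B (C * L) e * B ^ γ) ^ η ≤ 1) :
    ∫⁻ ω, ‖X ω T - T • v‖ₑ ^ 2 ∂P ≤
      ENNReal.ofReal ((2 * (δ * temperedScale B (C * L) e * B ^ γ)) ^ 2) +
        ENNReal.ofReal (49 * (B * C) ^ 4 / L ^ (p - 4)) * ∫⁻ ω, S ω ∂P := by
  set tail := 49 * (B * C) ^ 4 / L ^ (p - 4)
  have htail : 0 < tail := by positivity
  set amp := δ * temperedScale B (C * L) e * B ^ γ
  have hpath : ∀ᵐ ω ∂P, ‖X ω T - T • v‖ₑ ^ 2 ≤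
      ENNReal.ofReal ((2 * amp) ^ 2) + ENNReal.ofReal tail * S ω := by
    filter_upwards [hX, hF, hholder] with ω hXω hFω hω
    rcases eq_or_ne (S ω) ⊤ with htop | hfin
    · simp [htop, ENNReal.mul_top (ENNReal.ofReal_pos.2 htail).ne']
    have hσ : 1 ≤ (S ω).toReal ^ (p : ℝ)⁻¹ :=
      Real.one_le_rpow (by simpa using ENNReal.toReal_mono hfin (hS ω)) (by positivity)
    have hdisp := hXω.norm_sub_smul_sq_le (hω hfin) hexp hFω hv hδ hδ1 he he2 hT0 hT hB hC hσ hL hp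
      hsmall
    rw [Real.rpow_inv_natCast_pow ENNReal.toReal_nonneg (by omega)] at hdisp
    rw [← ofReal_norm, ← ENNReal.ofReal_pow (norm_nonneg _), ← ENNReal.ofReal_toReal hfin,
      ← ENNReal.ofReal_mul htail.le, ← ENNReal.ofReal_add (sq_nonneg _) (by positivity)]
    exact ENNReal.ofReal_le_ofReal hdisp
  calc ∫⁻ ω, ‖X ω T - T • v‖ₑ ^ 2 ∂P
      ≤ ∫⁻ ω, ENNReal.ofReal ((2 * amp) ^ 2) + ENNReal.ofReal tail * S ω ∂P :=
        lintegral_mono_ae hpath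
    _ = ENNReal.ofReal ((2 * amp) ^ 2) + ENNReal.ofReal tail * ∫⁻ ω, S ω ∂P := by
        rw [lintegral_add_left measurable_const, lintegral_const, measure_univ, mul_one,
          lintegral_const_mul' _ _ ENNReal.ofReal_ne_top]

end MeanSquare

section SpectralDyadicEnergy

variable {E : Type*} [NormedAddCommGroup E] [InnerProductSpace ℝ E] [MeasurableSpace E]
  [BorelSpace E] [FiniteDimensional ℝ E] (μ : Measure E) [μ.IsAddHaarMeasure] {K β γ : ℝ} {v : E}
  {Ω : Type*} [MeasurableSpace Ω] {P : Measure Ω} {F : Ω → E → E} {p : ℕ} {C : ENNReal}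

theorem SpectralMomentBound.exists_lintegral_dyadicEnergy_le [IsProbabilityMeasure P]
    (H : SpectralMomentBound K β v P F p C) (hC : C ≠ ⊤) (hK : 0 ≤ K) (hβ0 : 0 ≤ β) (hβ1 : β ≤ 1)
    (hv : ‖v‖ ≤ 1) (hF : Measurable (Function.uncurry F)) (hF_cont : ∀ᵐ ω ∂P, Continuous (F ω))
    (hκ : 2 ≤ (β - γ) * p) :
    ∃ A ≠ ⊤, ∀ T B, 0 < T → T ≤ B → 1 ≤ B →
      ∫⁻ ω, dyadicEnergy μ p v γ T (F ω) ∂P ≤ A * ENNReal.ofReal (B ^ ((β - γ) * p)) := by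
  have hp : p ≠ 0 := by
    rintro rfl
    norm_num at hκ
  obtain ⟨Λ, hΛ, hfield, hray⟩ :=
    SpectralMomentBound.exists_lintegral_sobolevEnergy_le μ H hC hK hβ0 hβ1 hv hF hF_cont hp
  refine ⟨1 + Λ + Λ * 2, by finiteness, fun T B hT hTB hB ↦ ?_⟩
  have hpow : 1 ≤ ENNReal.ofReal (B ^ ((β - γ) * p)) :=
    ENNReal.one_le_ofReal.2 (Real.one_le_rpow hB (by linarith))
  calc ∫⁻ ω, dyadicEnergy μ p v γ T (F ω) ∂P
      ≤ 1 + Λ + Λ * ENNReal.ofReal (T ^ ((β - γ) * p)) * 2 :=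
        lintegral_dyadicEnergy_le hF hT hκ hfield hray
    _ ≤ (1 + Λ) * ENNReal.ofReal (B ^ ((β - γ) * p)) +
          Λ * ENNReal.ofReal (B ^ ((β - γ) * p)) * 2 := by
        gcongr
        exact le_mul_of_one_le_right' hpow
    _ = (1 + Λ + Λ * 2) * ENNReal.ofReal (B ^ ((β - γ) * p)) := by ring

end SpectralDyadicEnergy

/-! ### Choice of exponents -/

section Exponents

open scoped Topology

/-- The exponents of the displacement estimate on the time scale `δ ^ (-σ)`. The time integrals of
the field are `α - κ` Hölder, its moments of order `p` are finite, and realizations whose seminorm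
exceeds `δ ^ (-4 * κ * σ)` are treated as exceptional. The last two fields make the contributions of
the exceptional and of the typical realizations vanish as `δ → 0`. -/
structure AdmissibleExponents (d : ℕ) (α σ κ : ℝ) (p : ℕ) : Prop where
  scale_pos : 0 < σ
  loss_pos : 0 < κ
  add_loss_le : α + κ ≤ 1
  two_mul_succ_le : 2 * (d + 1) ≤ p
  four_le : 4 ≤ p
  one_lt_mul : 1 < (α - κ) * (1 + (1 - 2 * (d : ℝ) / p))
  tail_lt : 4 + 2 * κ * p < 4 * κ * (p - 4)
  amplitude_lt : σ * (α - κ + 4 * κ + 2 * (((d : ℝ) + 1) / p) * (1 + 4 * κ)) < 1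

theorem exists_admissibleExponents (d : ℕ) {α σ : ℝ} (hα : 1 / 2 < α) (hα1 : α < 1) (hσ : 0 < σ)
    (hσα : σ * α < 1) : ∃ κ p, AdmissibleExponents d α σ κ p := by
  obtain ⟨κ, ⟨⟨hκ1, hκα⟩, hκσ⟩, hκ⟩ : ∃ κ, ((α + κ < 1 ∧ 1 / 2 < α - κ) ∧
      σ * (α - κ + 4 * κ + 2 * 0 * (1 + 4 * κ)) < 1) ∧ 0 < κ := by
    have hcont : ContinuousAt (fun κ ↦ σ * (α - κ + 4 * κ + 2 * 0 * (1 + 4 * κ))) 0 := by fun_prop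
    refine ((((?_ : ∀ᶠ κ in 𝓝 (0 : ℝ), _).and ?_).and ?_).filter_mono
      nhdsWithin_le_nhds |>.and self_mem_nhdsWithin : ∀ᶠ κ in 𝓝[>] (0 : ℝ), _).exists
    · exact (continuousAt_const.add continuousAt_id).eventually_lt_const (by simpa)
    · exact (continuousAt_const.sub continuousAt_id).eventually_const_lt (by simpa using hα)
    · exact hcont.eventually_lt_const (by simpa)
  have hvanish (c : ℝ) : Tendsto (fun p : ℕ ↦ c / (p : ℝ)) atTop (𝓝 0) :=
    tendsto_const_div_atTop_nhds_zero_nat c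
  have hone : ∀ᶠ p : ℕ in atTop, 1 < (α - κ) * (1 + (1 - 2 * (d : ℝ) / p)) :=
    (((hvanish (2 * d)).const_sub 1).const_add 1 |>.const_mul (α - κ)).eventually_const_lt
      (by linarith)
  have hamp : ∀ᶠ p : ℕ in atTop,
      σ * (α - κ + 4 * κ + 2 * (((d : ℝ) + 1) / p) * (1 + 4 * κ)) < 1 :=
    (((hvanish (d + 1)).const_mul 2 |>.mul_const (1 + 4 * κ)).const_add (α - κ + 4 * κ)
      |>.const_mul σ).eventually_lt_const hκσ
  have htail : ∀ᶠ p : ℕ in atTop, 4 + 16 * κ < 2 * κ * p :=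
    (tendsto_natCast_atTop_atTop.const_mul_atTop (by positivity)).eventually_gt_atTop _
  obtain ⟨p, hpd, hp4, hp1, hpt, hpa⟩ := ((eventually_ge_atTop (2 * (d + 1))).and <|
    (eventually_ge_atTop 4).and <| hone.and <| htail.and hamp).exists
  exact ⟨κ, p, hσ, hκ, hκ1.le, hpd, hp4, hp1, by linarith, hpa⟩

theorem tendsto_rpow_nhdsGT_zero {s : ℝ} (hs : 0 < s) :
    Tendsto (fun δ : ℝ ↦ δ ^ s) (𝓝[>] 0) (𝓝 0) := by
  simpa [hs.ne'] using
    ((Real.continuous_rpow_const hs.le).tendsto 0).mono_left nhdsWithin_le_nhds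

theorem mul_temperedScale_mul_rpow_eq {C δ : ℝ} (hC : 0 ≤ C) (hδ : 0 < δ) (σ ε e γ : ℝ) :
    δ * temperedScale (δ ^ (-σ)) (C * (δ ^ (-σ)) ^ ε) e * (δ ^ (-σ)) ^ γ =
      C * (3 * C) ^ (2 * e) * δ ^ (1 - σ * (γ + ε + 2 * e * (1 + ε))) := by
  have hbase : 3 * (δ ^ (-σ) * (C * (δ ^ (-σ)) ^ ε)) = 3 * C * δ ^ (-σ * (1 + ε)) := by
    rw [mul_one_add, Real.rpow_add hδ, Real.rpow_mul hδ.le]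
    ring
  have hexponent : δ ^ (1 - σ * (γ + ε + 2 * e * (1 + ε))) =
      δ * δ ^ (-σ * ε) * δ ^ (-σ * (1 + ε) * (2 * e)) * δ ^ (-σ * γ) := by
    nth_rw 2 [← Real.rpow_one δ]
    simp only [← Real.rpow_add hδ]
    ring_nf
  rw [temperedScale, hbase, Real.mul_rpow (by positivity) (by positivity), hexponent]
  simp only [← Real.rpow_mul hδ.le]
  ring

theorem tendsto_mul_temperedScale_mul_rpow {C σ ε e γ : ℝ} (hC : 0 ≤ C)
    (h : σ * (γ + ε + 2 * e * (1 + ε)) < 1) :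
    Tendsto (fun δ ↦ δ * temperedScale (δ ^ (-σ)) (C * (δ ^ (-σ)) ^ ε) e * (δ ^ (-σ)) ^ γ)
      (𝓝[>] 0) (𝓝 0) := by
  have hpow := (tendsto_rpow_nhdsGT_zero (sub_pos.2 h)).const_mul (C * (3 * C) ^ (2 * e))
  rw [mul_zero] at hpow
  refine hpow.congr' ?_
  filter_upwards [self_mem_nhdsWithin] with δ hδ
  exact (mul_temperedScale_mul_rpow_eq hC hδ σ ε e γ).symm

theorem tendsto_mul_pow_div_rpow_pow_mul_rpow {C ε κ : ℝ} {p : ℕ} (hp : 4 ≤ p)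
    (h : 4 + κ < ε * (p - 4)) :
    Tendsto (fun B : ℝ ↦ 49 * (B * C) ^ 4 / (B ^ ε) ^ (p - 4) * B ^ κ) atTop (𝓝 0) := by
  have hpow := (tendsto_rpow_neg_atTop (sub_pos.2 h)).const_mul (49 * C ^ 4)
  rw [mul_zero] at hpow
  refine hpow.congr' ?_
  filter_upwards [eventually_gt_atTop 0] with B hB
  have hexponent : B ^ (-(ε * (p - 4) - (4 + κ))) = B ^ 4 * B ^ κ / (B ^ ε) ^ (p - 4) := by
    rw [neg_sub, Real.rpow_sub hB, Real.rpow_add hB, ← Real.rpow_mul_natCast hB.le,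
      Nat.cast_sub hp]
    norm_cast
  rw [hexponent]
  ring

theorem tendsto_ofReal_two_mul_sq_add_mul_ofReal {amp tail : ℝ → ℝ} {l : Filter ℝ}
    (hamp : Tendsto amp l (𝓝 0)) (htail : Tendsto tail l (𝓝 0)) {A : ENNReal} (hA : A ≠ ⊤) :
    Tendsto (fun δ ↦ ENNReal.ofReal ((2 * amp δ) ^ 2) + A * ENNReal.ofReal (tail δ)) l (𝓝 0) := by
  simpa using (ENNReal.tendsto_ofReal ((hamp.const_mul 2).pow 2)).add
    (ENNReal.Tendsto.const_mul (ENNReal.tendsto_ofReal htail) (.inr hA))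

end Exponents

namespace AdmissibleExponents

open scoped Topology

variable {d : ℕ} {α σ κ : ℝ} {p : ℕ}

theorem cast_pos (h : AdmissibleExponents d α σ κ p) : (0 : ℝ) < p := by
  exact_mod_cast h.four_le.trans_lt' four_pos

theorem holder_pos (h : AdmissibleExponents d α σ κ p) : 0 < 1 - 2 * (d : ℝ) / p := by
  rw [sub_pos, div_lt_one h.cast_pos]
  exact_mod_cast h.two_mul_succ_le.trans_lt' (by omega)

theorem sewingExponents (h : AdmissibleExponents d α σ κ p) :
    SewingExponents (1 - 2 * (d : ℝ) / p) (α - κ) where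
  holder_nonneg := h.holder_pos.le
  holder_le_one := sub_le_self 1 (by positivity)
  time_nonneg := le_of_lt <| pos_of_mul_pos_left (zero_lt_one.trans h.one_lt_mul)
    (by linarith [h.holder_pos])
  time_le_one := by linarith [h.loss_pos, h.add_loss_le]
  one_lt_mul := h.one_lt_mul

theorem eventually_sewingConst_mul_rpow_le_one (h : AdmissibleExponents d α σ κ p)
    {amp : ℝ → ℝ} {l : Filter ℝ} (hamp : Tendsto amp l (𝓝 0)) :
    ∀ᶠ δ in l, sewingConst ((α - κ) * (1 + (1 - 2 * (d : ℝ) / p))) *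
      amp δ ^ (1 - 2 * (d : ℝ) / p) ≤ 1 := by
  have hpow := (hamp.rpow_const (.inr h.holder_pos.le)).const_mul
    (sewingConst ((α - κ) * (1 + (1 - 2 * (d : ℝ) / p))))
  rw [Real.zero_rpow h.holder_pos.ne', mul_zero] at hpow
  exact hpow.eventually_le_const one_pos

theorem tendsto_lintegral_enorm_sub_smul_sq (h : AdmissibleExponents d α σ κ p) {E : Type*}
    [NormedAddCommGroup E] [NormedSpace ℝ E] [CompleteSpace E] {v : E} (hv : ‖v‖ ≤ 1)
    {Ω : Type*} [MeasurableSpace Ω] {P : Measure Ω} [IsProbabilityMeasure P] {F : Ω → E → E}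
    (hF : ∀ᵐ ω ∂P, Continuous (F ω)) {X : ℝ → Ω → ℝ → E} {S : ℝ → Ω → ENNReal} {T : ℝ → ℝ}
    (hX : ∀ᶠ δ in 𝓝[>] 0, ∀ᵐ ω ∂P, IsDriftSolution v (F ω) δ (X δ ω))
    (hT : ∀ᶠ δ in 𝓝[>] 0, 0 < T δ ∧ T δ ≤ δ ^ (-σ)) {C : ℝ} (hC : 1 ≤ C)
    (hS : ∀ τ ω, 1 ≤ S τ ω)
    (hholder : ∀ τ, 0 < τ → ∀ᵐ ω ∂P, S τ ω ≠ ⊤ → TemperedHolderBound v (F ω) τ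
      (C * (S τ ω).toReal ^ (p : ℝ)⁻¹) (((d : ℝ) + 1) / p) (1 - 2 * (d : ℝ) / p) (α - κ))
    {A : ENNReal} (hA : A ≠ ⊤)
    (hSA : ∀ τ B, 0 < τ → τ ≤ B → 1 ≤ B →
      ∫⁻ ω, S τ ω ∂P ≤ A * ENNReal.ofReal (B ^ (2 * κ * p))) :
    Tendsto (fun δ ↦ ∫⁻ ω, ‖X δ ω (T δ) - T δ • v‖ₑ ^ 2 ∂P) (𝓝[>] 0) (𝓝 0) := by
  have hamp := tendsto_mul_temperedScale_mul_rpow (zero_le_one.trans hC) h.amplitude_lt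
  have htail := (tendsto_mul_pow_div_rpow_pow_mul_rpow (C := C) h.four_le h.tail_lt).comp
    (tendsto_rpow_neg_nhdsGT_zero (neg_lt_zero.2 h.scale_pos))
  have hsmall := h.eventually_sewingConst_mul_rpow_le_one hamp
  have he : ((d : ℝ) + 1) / p ≤ 1 / 2 := by
    rw [div_le_div_iff₀ h.cast_pos two_pos, mul_comm, one_mul]
    exact_mod_cast h.two_mul_succ_le
  refine tendsto_of_tendsto_of_tendsto_of_le_of_le' tendsto_const_nhds
    (tendsto_ofReal_two_mul_sq_add_mul_ofReal hamp htail hA) (.of_forall fun _ ↦ zero_le) ?_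
  have hδ1 : ∀ᶠ δ in 𝓝[>] (0 : ℝ), δ ∈ Ioc 0 1 := Ioc_mem_nhdsGT one_pos
  filter_upwards [hX, hT, hsmall, hδ1] with δ hXδ ⟨hT0, hTδ⟩ hsmallδ ⟨hδ0, hδ1⟩
  have hB : 1 ≤ δ ^ (-σ) :=
    Real.one_le_rpow_of_pos_of_le_one_of_nonpos hδ0 hδ1 (neg_nonpos.2 h.scale_pos.le)
  refine (lintegral_enorm_sub_smul_sq_le hXδ hF (hS (T δ)) (hholder _ hT0) h.sewingExponents hv
    hδ0.le hδ1 (by positivity) he hT0.le hTδ hB hC (by positivity) h.four_le hsmallδ).trans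
    (add_le_add_right ?_ _)
  rw [Function.comp_def, ENNReal.ofReal_mul (by positivity), mul_left_comm]
  gcongr
  exact hSA _ _ hT0 hTδ hB

end AdmissibleExponents

section VanishingDisplacement

open scoped Topology

theorem tendsto_integral_norm_sq_of_tendsto_lintegral_enorm_sq {ι Ω E : Type*} [MeasurableSpace Ω]
    {P : Measure Ω} [NormedAddCommGroup E] {l : Filter ι} {Z : ι → Ω → E}
    (h : Tendsto (fun i ↦ ∫⁻ ω, ‖Z i ω‖ₑ ^ 2 ∂P) l (𝓝 0)) :
    Tendsto (fun i ↦ ∫ ω, ‖Z i ω‖ ^ 2 ∂P) l (𝓝 0) := by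
  refine tendsto_zero_iff_enorm_tendsto_zero.2 (tendsto_of_tendsto_of_tendsto_of_le_of_le
    tendsto_const_nhds h (fun _ ↦ zero_le) fun i ↦ ?_)
  refine (enorm_integral_le_lintegral_enorm _).trans_eq (lintegral_congr fun ω ↦ ?_)
  rw [enorm_pow, enorm_norm]

theorem eventually_le_rpow_neg_of_isBigO {T : ℝ → ℝ} {σ τ : ℝ}
    (hT : T =O[𝓝[>] 0] fun δ ↦ δ ^ (-σ)) (hστ : σ < τ) : ∀ᶠ δ in 𝓝[>] 0, T δ ≤ δ ^ (-τ) := by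
  obtain ⟨c, hc⟩ := hT.bound
  have hsmall := (tendsto_rpow_nhdsGT_zero (sub_pos.2 hστ)).const_mul c
  rw [mul_zero] at hsmall
  filter_upwards [hc, hsmall.eventually_le_const one_pos, self_mem_nhdsWithin] with δ hTδ hδc hδ
  have hδ : 0 < δ := hδ
  calc T δ ≤ c * δ ^ (-σ) := 
        (Real.le_norm_self _).trans (by rwa [Real.norm_of_nonneg (Real.rpow_nonneg hδ.le _)] at hTδ)
    _ = c * δ ^ (τ - σ) * δ ^ (-τ) := by
        rw [mul_assoc, ← Real.rpow_add hδ]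
        ring_nf
    _ ≤ δ ^ (-τ) := mul_le_of_le_one_left (by positivity) hδc

theorem stmt1_general {d : ℕ} {α : ℝ} (hα1 : 1 / 2 < α) (hα2 : α < 1) {K : ℝ} (hK : 0 ≤ K)
    {a : ℝ → ℝ} (ha_nonneg : ∀ r, 0 ≤ r → 0 ≤ a r) (ha_bdd : ∃ M, ∀ r, 0 ≤ r → a r ≤ M)
    (ha_meas : Measurable a) (ha_supp : ∀ r, K < r → a r = 0)
    {v : EuclideanSpace ℝ (Fin d)} (hv : ‖v‖ = 1)
    {Ω : Type*} [MeasurableSpace Ω] {P : Measure Ω} [IsProbabilityMeasure P]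
    {F : Ω → EuclideanSpace ℝ (Fin d) → EuclideanSpace ℝ (Fin d)}
    (hF_meas : Measurable (Function.uncurry F)) (hF_cont : ∀ᵐ ω ∂P, Continuous (F ω))
    (hF_gauss : IsHomogeneousGaussianField P F (covEntry d α a))
    {X : ℝ → Ω → ℝ → EuclideanSpace ℝ (Fin d)}
    (hX : ∀ᶠ δ in 𝓝[>] 0, ∀ᵐ ω ∂P, IsDriftSolution v (F ω) δ (X δ ω))
    {T : ℝ → ℝ} {σ : ℝ} (hσ : σ < 1 / α) (hT_pos : ∀ᶠ δ in 𝓝[>] 0, 0 < T δ)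
    (hT : T =O[𝓝[>] 0] fun δ ↦ δ ^ (-σ)) :
    Tendsto (fun δ ↦ ∫⁻ ω, ‖X δ ω (T δ) - T δ • v‖ₑ ^ 2 ∂P) (𝓝[>] 0) (𝓝 0) := by
  have hα0 : 0 < α := by linarith
  obtain ⟨τ, hτ, hτα⟩ := exists_between (max_lt hσ (one_div_pos.2 hα0))
  obtain ⟨hστ, hτ0⟩ := max_lt_iff.1 hτ
  obtain ⟨κ, p, hexp⟩ := exists_admissibleExponents d hα1 hα2 hτ0 ((lt_div_iff₀ hα0).1 hτα)
  have hβγ : α + κ - (α - κ) = 2 * κ := by ring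
  obtain ⟨M, hM, hmoment⟩ := exists_spectralMomentBound hα1.le (lt_add_of_pos_right α hexp.loss_pos)
    hexp.add_loss_le ha_nonneg ha_bdd ha_meas ha_supp hv (fun _ ↦ hF_meas.of_uncurry_right)
    hF_gauss (p := p) (by have := hexp.four_le; omega)
  obtain ⟨A, hA, henergy⟩ := SpectralMomentBound.exists_lintegral_dyadicEnergy_le volume
    (γ := α - κ) hmoment hM hK (by linarith [hexp.loss_pos]) hexp.add_loss_le hv.le hF_meas hF_cont
    (by rw [hβγ]; linarith [hexp.tail_lt, hexp.loss_pos])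
  rw [hβγ] at henergy
  obtain ⟨C, hC, hholder⟩ := exists_temperedHolderBound (EuclideanSpace ℝ (Fin d)) volume (p := p)
    (by rw [finrank_euclideanSpace_fin]; have := hexp.two_mul_succ_le; omega)
  rw [finrank_euclideanSpace_fin] at hholder
  exact hexp.tendsto_lintegral_enorm_sub_smul_sq hv.le hF_cont hX
    (hT_pos.and (eventually_le_rpow_neg_of_isBigO hT hστ)) hC
    (fun _ _ ↦ one_le_dyadicEnergy ..)
    (fun τ hτ ↦ hF_cont.mono fun ω hω ↦ hholder v (F ω) _ τ hω hτ) hA henergy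

end VanishingDisplacement

/-- In the same setting (Gaussian, centered, homogeneous, divergence-free
field with power spectrum determined by `a` and `α`), assume `1/2 < α < 1` and set
`H = 1/(2α)`. For every `t > 0` and `ρ > 0`, with `T_δ⁻ = t^{1-ρ} δ^{-2H(1-ρ)}`, one has
`lim_{δ→0+} E|y_δ(T_δ⁻)|² = 0`. -/
theorem stmt1 (d : ℕ) (hd : 2 ≤ d)
    (α : ℝ) (hα1 : 1 / 2 < α) (hα2 : α < 1)
    (K : ℝ) (hK : 0 < K)
    (a : ℝ → ℝ)
    (ha_nonneg : ∀ r : ℝ, 0 ≤ r → 0 ≤ a r)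
    (ha_bdd : ∃ M : ℝ, ∀ r : ℝ, 0 ≤ r → a r ≤ M)
    (ha_meas : Measurable a)
    (ha_supp : ∀ r : ℝ, K < r → a r = 0)
    (ha_cont : ContinuousAt a 0)
    (ha_one : a 0 = 1)
    (v : EuclideanSpace ℝ (Fin d)) (hv : ‖v‖ = 1)
    (Ω : Type*) [MeasurableSpace Ω] (P : Measure Ω) [IsProbabilityMeasure P]
    (F : Ω → EuclideanSpace ℝ (Fin d) → EuclideanSpace ℝ (Fin d))
    (hF_meas : Measurable (Function.uncurry F))
    (hF_reg : ∀ᵐ ω ∂P, ContDiff ℝ 1 (F ω) ∧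
      ∀ x : EuclideanSpace ℝ (Fin d),
        ∑ i : Fin d, fderiv ℝ (F ω) x (EuclideanSpace.single i 1) i = 0)
    (hF_gauss : ∀ (N : ℕ) (x c : Fin N → EuclideanSpace ℝ (Fin d)),
      Measure.map (fun ω => ∑ j : Fin N, ⟪c j, F ω (x j)⟫) P =
        gaussianReal 0 (Real.toNNReal (∑ j : Fin N, ∑ l : Fin N,
          ∑ i : Fin d, ∑ i' : Fin d,
            c j i * covEntry d α a (x j - x l) i i' * c l i')))
    (X : ℝ → Ω → ℝ → EuclideanSpace ℝ (Fin d))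
    (hX_meas : ∀ δ ∈ Ioc (0:ℝ) 1, Measurable (Function.uncurry (X δ)))
    (hX_sol : ∀ δ ∈ Ioc (0:ℝ) 1, ∀ᵐ ω ∂P, X δ ω 0 = 0 ∧
      ∀ s : ℝ, 0 ≤ s → HasDerivAt (X δ ω) (v + δ • F ω (X δ ω s)) s)
    (hy_int : ∀ δ ∈ Ioc (0:ℝ) 1, ∀ s : ℝ,
      Integrable (fun ω => ‖X δ ω s - s • v‖ ^ 2) P)
    (hy_loc : ∀ δ ∈ Ioc (0:ℝ) 1, ∀ T : ℝ,
      IntegrableOn (fun s => ∫ ω, ‖X δ ω s - s • v‖ ^ 2 ∂P) (Icc 0 T) volume)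
    (t ρ : ℝ) (ht : 0 < t) (hρ : 0 < ρ) :
    Tendsto (fun δ : ℝ =>
        ∫ ω, ‖X δ ω (t ^ (1 - ρ) * δ ^ (-2 * (1 / (2 * α)) * (1 - ρ))) -
            (t ^ (1 - ρ) * δ ^ (-2 * (1 / (2 * α)) * (1 - ρ))) • v‖ ^ 2 ∂P)
      (nhdsWithin 0 (Ioi 0)) (nhds 0) := by
  have : 0 < α := by linarith
  have hexponent : -2 * (1 / (2 * α)) * (1 - ρ) = -((1 - ρ) / α) := by field
  rw [hexponent]
  exact tendsto_integral_norm_sq_of_tendsto_lintegral_enorm_sq <|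
    stmt1_general hα1 hα2 hK.le ha_nonneg ha_bdd ha_meas ha_supp hv hF_meas
      (hF_reg.mono fun ω h ↦ h.1.continuous) hF_gauss
      (eventually_of_mem (Ioc_mem_nhdsGT one_pos) hX_sol) (by gcongr; linarith)
      (eventually_of_mem self_mem_nhdsWithin fun δ (hδ : 0 < δ) ↦ by positivity)
      (Asymptotics.isBigO_const_mul_self _ _ _)
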